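/- arXiv:2604.13212 — 6 statements merged into one kernel-verified Lean document; each statement's English description precedes it below -/
import Mathlib

section
/- For every nonempty finite simple graph G, the fractional DP-chromatic number satisfies χ*_DP(G) ≤ ST^(3)*(G) ≤ ST^(4)*(G). -/
/-!
The second inequality holds because a restricted complete legal sequence is in particular a
complete legal sequence, so the infimum defining `ST4Star` runs over a smaller set. That set is
nonempty, since with shield `|V|` and target `1` the vertices can be deleted one at a time
without saving any (`exists_complete_noSave`).

For the first inequality, an `ST⁽³⁾`-`(s,t)`-degenerate graph is `(s+t,t)`-DP-colorable: a
complete legal sequence is turned into a colouring by choosing one element `x` of the current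
list of `u` for each operation on `u`. As the cover is a matching over every edge, the vertices of
`W` together forbid at most `∑_{w ∈ W} (S w + T w)` elements of the list of `u`, so some `x` has no
neighbour in the lists of `W` (`exists_free`). Deleting `x` and its neighbours costs every
unsaved neighbour of `u` at most one list element, which is paid for by its shield. Iterating
this keeps the list sizes equal to `S + T` (`exists_indep_of_legalSeq`).
-/

open scoped Classical

noncomputable section

namespace StrictDeg

/-- The state of the `ShadeSave` process: the active vertex set (the vertex set of the
current induced subgraph), the current shield, and the current target. -/
structure State (V : Type) where
  A : Finset V
  S : V → ℕ
  T : V → ℕ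

variable {V : Type}

/-- The output of the operation `ShadeSave(G[A], S, T, u, W)`. -/
def applyStep (G : SimpleGraph V) (st : State V) (u : V) (W : Finset V) : State V where
  A := if st.T u = 1 then st.A.erase u else st.A
  S := fun v => if G.Adj u v ∧ v ∈ st.A ∧ v ∉ W then st.S v - 1 else st.S v
  T := fun v => if v = u ∧ 1 < st.T u then st.T u - 1 else st.T v

/-- Legality of the operation `ShadeSave(G[A], S, T, u, W)`:  `u` is a vertex of the current
graph, `W` is a set of neighbors of `u` in the current graph,
`S u + T u > ∑_{w ∈ W} (S w + T w)`, and the output shield is nonnegative (in `ℕ` terms: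
every neighbor of `u` in the current graph that is not saved has shield value at least 1). -/
def LegalStep (G : SimpleGraph V) (st : State V) (u : V) (W : Finset V) : Prop :=
  u ∈ st.A ∧
  (∀ w ∈ W, w ∈ st.A ∧ G.Adj u w) ∧
  (∑ w ∈ W, (st.S w + st.T w)) < st.S u + st.T u ∧
  (∀ v ∈ st.A, G.Adj u v → v ∉ W → 1 ≤ st.S v)

/-- `LegalSeq G st l` means `l` is a legal sequence of `ShadeSave` operations starting
from the state `st`. -/
def LegalSeq (G : SimpleGraph V) : State V → List (V × Finset V) → Prop
  | _, [] => True
  | st, op :: rest => LegalStep G st op.1 op.2 ∧ LegalSeq G (applyStep G st op.1 op.2) rest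

/-- The final state after applying the operations in `l` in order. -/
def finalState (G : SimpleGraph V) (st : State V) (l : List (V × Finset V)) : State V :=
  l.foldl (fun s op => applyStep G s op.1 op.2) st

/-- The induced subgraph of `G` on `A`, with shield `S` and target `T`, admits a complete
legal sequence, i.e. it is `ST⁽³⁾`-`(S,T)`-degenerate. -/
def ST3DegOn (G : SimpleGraph V) (A : Finset V) (S T : V → ℕ) : Prop :=
  ∃ l : List (V × Finset V),
    LegalSeq G ⟨A, S, T⟩ l ∧ (finalState G ⟨A, S, T⟩ l).A = ∅

/-- The induced subgraph of `G` on `A`, with shield `S` and target `T`, admits a complete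
restricted (every operation saves on at most one vertex) legal sequence, i.e. it is
`ST⁽⁴⁾`-`(S,T)`-degenerate. -/
def ST4DegOn (G : SimpleGraph V) (A : Finset V) (S T : V → ℕ) : Prop :=
  ∃ l : List (V × Finset V),
    LegalSeq G ⟨A, S, T⟩ l ∧ (∀ op ∈ l, op.2.card ≤ 1) ∧
      (finalState G ⟨A, S, T⟩ l).A = ∅

/-- `G` is `ST⁽³⁾`-`(S,T)`-degenerate. -/
def ST3Deg [Fintype V] (G : SimpleGraph V) (S T : V → ℕ) : Prop :=
  ST3DegOn G Finset.univ S T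

/-- `G` is `ST⁽⁴⁾`-`(S,T)`-degenerate. -/
def ST4Deg [Fintype V] (G : SimpleGraph V) (S T : V → ℕ) : Prop :=
  ST4DegOn G Finset.univ S T

/-- The fractional strict type-3 degeneracy
`ST⁽³⁾*(G) = inf {(s+t)/t : G is ST⁽³⁾-(s,t)-degenerate}`. -/
def ST3Star [Fintype V] (G : SimpleGraph V) : ℝ :=
  sInf { x : ℝ | ∃ s t : ℕ, 1 ≤ t ∧ ST3Deg G (fun _ => s) (fun _ => t) ∧
    x = ((s : ℝ) + t) / t }

/-- The fractional strict type-4 degeneracy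
`ST⁽⁴⁾*(G) = inf {(s+t)/t : G is ST⁽⁴⁾-(s,t)-degenerate}`. -/
def ST4Star [Fintype V] (G : SimpleGraph V) : ℝ :=
  sInf { x : ℝ | ∃ s t : ℕ, 1 ≤ t ∧ ST4Deg G (fun _ => s) (fun _ => t) ∧
    x = ((s : ℝ) + t) / t }

/-- A cover `𝓗 = (L, H)` of the graph `G`. -/
structure Cover (G : SimpleGraph V) where
  /-- The vertex type of the cover graph `H`. -/
  U : Type
  fin : Fintype U
  /-- The cover graph. -/
  H : SimpleGraph U
  /-- The lists: `L v` is the part of the partition of `V(H)` corresponding to `v`. -/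
  L : V → Finset U
  part : ∀ x : U, ∃! v : V, x ∈ L v
  indep : ∀ v : V, ∀ x ∈ L v, ∀ y ∈ L v, ¬ H.Adj x y
  cross : ∀ u v : V, ∀ x ∈ L u, ∀ y ∈ L v, H.Adj x y → G.Adj u v
  matching : ∀ u v : V, G.Adj u v → ∀ x ∈ L u, ∀ y ∈ L v, ∀ y' ∈ L v,
      H.Adj x y → H.Adj x y' → y = y'

/-- `G` is `(𝓗, b)`-colorable: there is an independent set of the cover graph meeting
every list in at least `b` vertices. -/
def Cover.Colorable {G : SimpleGraph V} (C : Cover G) (b : ℕ) : Prop :=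
  ∃ I : Finset C.U, (∀ x ∈ I, ∀ y ∈ I, ¬ C.H.Adj x y) ∧ ∀ v : V, b ≤ (I ∩ C.L v).card

/-- `G` is `(a,b)`-DP-colorable. -/
def DPColorable (G : SimpleGraph V) (a b : ℕ) : Prop :=
  ∀ C : Cover G, (∀ v : V, (C.L v).card = a) → C.Colorable b

/-- The fractional DP-chromatic number
`χ*_DP(G) = inf {a/b : G is (a,b)-DP-colorable}`. -/
def DPStar (G : SimpleGraph V) : ℝ :=
  sInf { x : ℝ | ∃ a b : ℕ, 1 ≤ b ∧ b ≤ a ∧ DPColorable G a b ∧ x = (a : ℝ) / b }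

/-- `G` is `(F₁, F₂)`-DP-colorable. -/
def DPColorableFn (G : SimpleGraph V) (F₁ F₂ : V → ℕ) : Prop :=
  ∀ C : Cover G, (∀ v : V, (C.L v).card = F₁ v) →
    ∃ I : Finset C.U, (∀ x ∈ I, ∀ y ∈ I, ¬ C.H.Adj x y) ∧
      ∀ v : V, (I ∩ C.L v).card = F₂ v

/-- A state with unit targets whose shields are at least the number of active vertices can be
emptied by deleting the vertices in any order, saving none of them. -/
lemma exists_complete_noSave (G : SimpleGraph V) (n : ℕ) (st : State V)
    (hn : st.A.card = n) (hT : ∀ v ∈ st.A, st.T v = 1) (hS : ∀ v ∈ st.A, n ≤ st.S v) :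
    ∃ l : List (V × Finset V), LegalSeq G st l ∧ (∀ op ∈ l, op.2.card ≤ 1) ∧
      (finalState G st l).A = ∅ := by
  induction n generalizing st with
  | zero => exact ⟨[], trivial, by simp, by simpa [finalState] using hn⟩
  | succ n ih =>
    obtain ⟨u, hu⟩ : st.A.Nonempty := Finset.card_pos.1 (by omega)
    have hTu := hT u hu
    have hA : (applyStep G st u ∅).A = st.A.erase u := by simp [applyStep, hTu]
    obtain ⟨l, h1, h2, h3⟩ := ih (applyStep G st u ∅)
      (by rw [hA, Finset.card_erase_of_mem hu, hn]; rfl)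
      (by
        intro v hv
        rw [hA, Finset.mem_erase] at hv
        simp [applyStep, hTu, hT v hv.2])
      (by
        intro v hv
        rw [hA, Finset.mem_erase] at hv
        have := hS v hv.2
        simp only [applyStep]
        split_ifs <;> omega)
    refine ⟨(u, ∅) :: l, ⟨⟨hu, by simp, by simp [hTu], ?_⟩, h1⟩, ?_, h3⟩
    · intro v hv _ _
      have := hS v hv
      omega
    · intro op hop
      rcases List.mem_cons.1 hop with rfl | hop
      · simp
      · exact h2 op hop

lemma Cover.eq_of_mem {G : SimpleGraph V} (C : Cover G) {x : C.U} {u v : V}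
    (hu : x ∈ C.L u) (hv : x ∈ C.L v) : u = v :=
  (C.part x).unique hu hv

/-- If the sublist `L u` is larger than the sublists over a set `W` of neighbours of `u`
together, then some element of `L u` has no neighbour in any of the latter. -/
lemma exists_free {G : SimpleGraph V} (C : Cover G) (L : V → Finset C.U)
    (hL : ∀ v, L v ⊆ C.L v) (u : V) (W : Finset V) (hW : ∀ w ∈ W, G.Adj u w)
    (hlt : ∑ w ∈ W, (L w).card < (L u).card) :
    ∃ x ∈ L u, ∀ w ∈ W, ∀ y ∈ L w, ¬ C.H.Adj x y := by
  by_contra! hcon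
  -- The elements of `L u` forbidden by `W` would then exhaust `L u`.
  have hsub : L u ⊆ W.biUnion fun w => (L u).filter fun x => ∃ y ∈ L w, C.H.Adj x y := by
    intro x hx
    obtain ⟨w, hw, y, hy, hxy⟩ := hcon x hx
    exact Finset.mem_biUnion.2 ⟨w, hw, Finset.mem_filter.2 ⟨hx, y, hy, hxy⟩⟩
  have hone : ∀ w ∈ W,
      ((L u).filter fun x => ∃ y ∈ L w, C.H.Adj x y).card ≤ (L w).card := by
    intro w hw
    refine Finset.card_le_card_of_forall_subsingleton (fun x y => C.H.Adj x y) ?_ ?_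
    · intro x hx
      exact (Finset.mem_filter.1 hx).2
    · intro y hy x hx x' hx'
      exact C.matching w u (hW w hw).symm y (hL w hy)
        x (hL u (Finset.mem_filter.1 hx.1).1) x' (hL u (Finset.mem_filter.1 hx'.1).1)
        hx.2.symm hx'.2.symm
  have := (Finset.card_le_card hsub).trans
    (Finset.card_biUnion_le.trans (Finset.sum_le_sum hone))
  omega

/-- What remains of the list `L v` after `x` has been chosen: `x` and its
neighbours in the cover graph are discarded. -/
def remaining {G : SimpleGraph V} (C : Cover G) (L : V → Finset C.U) (x : C.U) (v : V) :
    Finset C.U :=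
  (L v).filter fun y => y ≠ x ∧ ¬ C.H.Adj x y

/-- Choosing an element `x` over `u` with no neighbours over `W` leaves every active vertex a
list of the size required by the state after the operation. -/
lemma card_remaining {G : SimpleGraph V} (C : Cover G) (st : State V) (L : V → Finset C.U)
    (hL : ∀ v, L v ⊆ C.L v) (hT : ∀ v ∈ st.A, 1 ≤ st.T v)
    (hc : ∀ v ∈ st.A, (L v).card = st.S v + st.T v)
    (u : V) (W : Finset V) (hleg : LegalStep G st u W) (x : C.U) (hx : x ∈ L u)
    (hfree : ∀ w ∈ W, ∀ y ∈ L w, ¬ C.H.Adj x y) (v : V)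
    (hv : v ∈ (applyStep G st u W).A) :
    (applyStep G st u W).S v + (applyStep G st u W).T v ≤ (remaining C L x v).card := by
  obtain ⟨hu, hW, -, hS⟩ := hleg
  have hvA : v ∈ st.A := by
    simp only [applyStep] at hv
    split_ifs at hv with h
    exacts [Finset.mem_of_mem_erase hv, hv]
  by_cases hvu : v = u
  · subst hvu
    have hT1 : st.T v ≠ 1 := by
      intro h
      simp [applyStep, h] at hv
    have hT2 : 1 < st.T v := by
      have := hT v hu
      omega
    have hrem : remaining C L x v = (L v).erase x := by
      ext y
      simp only [remaining, Finset.mem_filter, Finset.mem_erase]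
      constructor
      · rintro ⟨h1, h2, -⟩
        exact ⟨h2, h1⟩
      · rintro ⟨h1, h2⟩
        exact ⟨h2, h1, C.indep v x (hL v hx) y (hL v h2)⟩
    rw [hrem, Finset.card_erase_of_mem hx, hc v hu]
    simp [applyStep, hT2]
    omega
  · have hne : ∀ y ∈ L v, y ≠ x := by
      rintro y hy rfl
      exact hvu (C.eq_of_mem (hL v hy) (hL u hx))
    have hTv : (applyStep G st u W).T v = st.T v := by simp [applyStep, hvu]
    rw [hTv]
    by_cases hadj : G.Adj u v ∧ v ∉ W
    · have hSv : (applyStep G st u W).S v = st.S v - 1 := by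
        simp [applyStep, hadj.1, hadj.2, hvA]
      -- At most one element is lost, because the cover is a matching over the edge `uv`.
      have hlost : ((L v).filter fun y => C.H.Adj x y).card ≤ 1 := by
        rw [Finset.card_le_one]
        intro y hy y' hy'
        rw [Finset.mem_filter] at hy hy'
        exact C.matching u v hadj.1 x (hL u hx) y (hL v hy.1) y' (hL v hy'.1) hy.2 hy'.2
      have hrem : remaining C L x v = (L v).filter fun y => ¬ C.H.Adj x y :=
        Finset.filter_congr fun y hy => by simp [hne y hy]
      have hsplit := Finset.card_filter_add_card_filter_not (s := L v) (fun y => C.H.Adj x y)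
      have h1 := hS v hvA hadj.1 hadj.2
      have h2 := hc v hvA
      rw [hSv, hrem]
      omega
    · have hSv : (applyStep G st u W).S v = st.S v := by
        simp only [applyStep]
        rw [if_neg]
        tauto
      have hrem : remaining C L x v = L v := by
        refine Finset.filter_true_of_mem fun y hy => ⟨hne y hy, fun hxy => ?_⟩
        have hG := C.cross u v x (hL u hx) y (hL v hy) hxy
        have hvW : v ∈ W := by tauto
        exact hfree v hvW y hy hxy
      rw [hSv, hrem, hc v hvA]

/-- A complete legal sequence yields an independent set of the cover graph meeting the target,
provided the list of every active vertex `v` has exactly `S v + T v` elements. -/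
lemma exists_indep_of_legalSeq {G : SimpleGraph V} (C : Cover G) (l : List (V × Finset V))
    (st : State V) (hT : ∀ v ∈ st.A, 1 ≤ st.T v) (hl : LegalSeq G st l)
    (hfin : (finalState G st l).A = ∅) (L : V → Finset C.U) (hL : ∀ v, L v ⊆ C.L v)
    (hc : ∀ v ∈ st.A, (L v).card = st.S v + st.T v) :
    ∃ I : Finset C.U, (∀ y ∈ I, ∃ v ∈ st.A, y ∈ L v) ∧
      (∀ x ∈ I, ∀ y ∈ I, ¬ C.H.Adj x y) ∧ ∀ v ∈ st.A, st.T v ≤ (I ∩ L v).card := by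
  induction l generalizing st L with
  | nil =>
    have hA : st.A = ∅ := hfin
    exact ⟨∅, by simp, by simp, by simp [hA]⟩
  | cons op l ih =>
    obtain ⟨u, W⟩ := op
    obtain ⟨hleg, hl⟩ := hl
    dsimp only at hleg hl
    have hleg' := hleg
    obtain ⟨hu, hW, hlt, -⟩ := hleg'
    obtain ⟨x, hx, hfree⟩ := exists_free C L hL u W (fun w hw => (hW w hw).2) (by
      rw [hc u hu, Finset.sum_congr rfl fun w hw => hc w (hW w hw).1]
      exact hlt)
    have hcard := card_remaining C st L hL hT hc u W hleg x hx hfree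
    -- Trim the remaining lists to the exact size: `exists_free` needs upper bounds on the
    -- sizes of the lists over `W`.
    have htrim : ∀ v, ∃ K : Finset C.U, K ⊆ remaining C L x v ∧
        (v ∈ (applyStep G st u W).A →
          K.card = (applyStep G st u W).S v + (applyStep G st u W).T v) := by
      intro v
      by_cases hv : v ∈ (applyStep G st u W).A
      · obtain ⟨K, h1, h2⟩ := Finset.exists_subset_card_eq (hcard v hv)
        exact ⟨K, h1, fun _ => h2⟩
      · exact ⟨∅, by simp, fun h => absurd h hv⟩
    choose K hKrem hKcard using htrim
    have hKL : ∀ v, K v ⊆ L v := fun v => (hKrem v).trans (Finset.filter_subset _ _)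
    have hAsub : ∀ v ∈ (applyStep G st u W).A, v ∈ st.A := by
      intro v hv
      simp only [applyStep] at hv
      split_ifs at hv with h
      exacts [Finset.mem_of_mem_erase hv, hv]
    obtain ⟨I, hI1, hI2, hI3⟩ := ih (applyStep G st u W)
      (by
        intro v hv
        have := hT v (hAsub v hv)
        simp only [applyStep]
        split_ifs with h <;> omega)
      hl hfin K (fun v => (hKL v).trans (hL v)) hKcard
    have hIx : ∀ y ∈ I, y ≠ x ∧ ¬ C.H.Adj x y := by
      intro y hy
      obtain ⟨v, -, hyv⟩ := hI1 y hy
      exact (Finset.mem_filter.1 (hKrem v hyv)).2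
    have hmono : ∀ v, I ∩ K v ⊆ I ∩ L v := fun v => Finset.inter_subset_inter_left (hKL v)
    refine ⟨insert x I, ?_, ?_, ?_⟩
    · intro y hy
      rcases Finset.mem_insert.1 hy with rfl | hy
      · exact ⟨u, hu, hx⟩
      · obtain ⟨v, hv, hyv⟩ := hI1 y hy
        exact ⟨v, hAsub v hv, hKL v hyv⟩
    · intro y hy z hz
      rcases Finset.mem_insert.1 hy with rfl | hyI <;> rcases Finset.mem_insert.1 hz with rfl | hzI
      · exact C.H.irrefl
      · exact (hIx z hzI).2
      · exact fun h => (hIx y hyI).2 h.symm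
      · exact hI2 y hyI z hzI
    · intro v hv
      by_cases hvu : v = u
      · subst hvu
        have hnot : x ∉ I ∩ L v := fun h => (hIx x (Finset.mem_inter.1 h).1).1 rfl
        rw [Finset.insert_inter_of_mem hx, Finset.card_insert_of_notMem hnot]
        by_cases hT1 : st.T v = 1
        · omega
        · have h1 : v ∈ (applyStep G st v W).A := by simpa [applyStep, hT1] using hv
          have h2 := (hI3 v h1).trans (Finset.card_le_card (hmono v))
          have h3 : 1 < st.T v := by
            have := hT v hv
            omega
          simp only [applyStep, h3, and_self, if_true] at h2
          omega
      · have h1 : v ∈ (applyStep G st u W).A := by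
          simp only [applyStep]
          split_ifs
          exacts [Finset.mem_erase.2 ⟨hvu, hv⟩, hv]
        have h2 := (hI3 v h1).trans (Finset.card_le_card (hmono v))
        have h3 : (applyStep G st u W).T v = st.T v := by simp [applyStep, hvu]
        rw [h3] at h2
        exact h2.trans (Finset.card_le_card
          (Finset.inter_subset_inter_right (Finset.subset_insert x I)))

lemma dpColorable_of_st3Deg [Fintype V] {G : SimpleGraph V} {s t : ℕ} (ht : 1 ≤ t)
    (h : ST3Deg G (fun _ => s) (fun _ => t)) : DPColorable G (s + t) t := by
  intro C hC
  obtain ⟨l, hl, hfin⟩ := h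
  obtain ⟨I, -, hI, hcard⟩ := exists_indep_of_legalSeq C l _ (fun _ _ => ht) hl hfin C.L
    (fun _ => Finset.Subset.refl _) (fun v _ => hC v)
  exact ⟨I, hI, fun v => hcard v (Finset.mem_univ v)⟩

lemma ST4Deg.st3Deg [Fintype V] {G : SimpleGraph V} {S T : V → ℕ} (h : ST4Deg G S T) :
    ST3Deg G S T := by
  obtain ⟨l, hl, -, hfin⟩ := h
  exact ⟨l, hl, hfin⟩

lemma st4Deg_card [Fintype V] (G : SimpleGraph V) :
    ST4Deg G (fun _ => Fintype.card V) (fun _ => 1) :=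
  exists_complete_noSave G (Fintype.card V) ⟨Finset.univ, _, _⟩ Finset.card_univ
    (fun _ _ => rfl) (fun _ _ => le_rfl)

/-- For every nonempty finite simple graph `G`, the fractional DP-chromatic
number satisfies `χ*_DP(G) ≤ ST⁽³⁾*(G) ≤ ST⁽⁴⁾*(G)`. -/
theorem dpStar_le_st3Star_le_st4Star {V : Type} [Fintype V] [Nonempty V]
    (G : SimpleGraph V) :
    DPStar G ≤ ST3Star G ∧ ST3Star G ≤ ST4Star G := by
  refine ⟨csInf_le_csInf ?_ ?_ ?_, csInf_le_csInf ?_ ?_ ?_⟩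
  · refine ⟨0, ?_⟩
    rintro x ⟨a, b, -, -, -, rfl⟩
    positivity
  · exact ⟨_, _, 1, le_rfl, (st4Deg_card G).st3Deg, rfl⟩
  · rintro x ⟨s, t, ht, h, rfl⟩
    exact ⟨s + t, t, ht, by omega, dpColorable_of_st3Deg ht h, by push_cast; rfl⟩
  · refine ⟨0, ?_⟩
    rintro x ⟨s, t, -, -, rfl⟩
    positivity
  · exact ⟨_, _, 1, le_rfl, st4Deg_card G, rfl⟩
  · rintro x ⟨s, t, ht, h, rfl⟩
    exact ⟨s, t, ht, h.st3Deg, rfl⟩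

end StrictDeg
end
end

section
/- For every integer r ≥ 2, the even cycle C_{2r} satisfies ST^(4)*(C_{2r}) = 2. -/
/-!
Write `a v = S v + T v`.

Lower bound.  For an edge `uv`, the condition `S u < T v ∧ S v < T u` with `u`, `v` both present
is preserved by every legal operation: if `u` is treated and `v` is not saved, both sides of
`S v < T u` drop by one; if `v` is saved, then `a u > a v` together with `S u < T v` leaves room
for `T u` to drop.  So if `s < t`, neither endpoint is ever deleted, and degeneracy forces `t ≤ s`
(`not_deleted_of_edge`).

Upper bound.  The pair `(t + 1, t)` works for each `t ≥ 2`, giving the ratios `2 + 1 / t`.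
Let `X` be one colour class of the cycle, oriented by its successor map `σ`.  First every vertex
of `X` is treated once without saving, so each vertex outside `X` ends with shield `t - 1` and each
vertex of `X` with target `t - 1` (`good_firstRound`).  From then on, treating `u ∈ X` while saving
`σ u` keeps the shield of the predecessor of `u` equal to the remaining target of `u`, and this
operation is legal as soon as the remaining target of `u` is maximal in `X` (`good_mainPhase`).
When `X` is exhausted the remaining vertices are pairwise nonadjacent (`good_of_indep`).
-/

open scoped Classical

noncomputable section

namespace StrictDeg

variable {V : Type}

/-- Some complete restricted legal sequence starts at the state `st`. -/
def Good (G : SimpleGraph V) (st : State V) : Prop :=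
  ∃ l : List (V × Finset V), LegalSeq G st l ∧ (∀ op ∈ l, op.2.card ≤ 1) ∧
    (finalState G st l).A = ∅

lemma Good.step {G : SimpleGraph V} {st : State V} {u : V} {W : Finset V}
    (hl : LegalStep G st u W) (hW : W.card ≤ 1) (h : Good G (applyStep G st u W)) :
    Good G st := by
  obtain ⟨l, h1, h2, h3⟩ := h
  refine ⟨(u, W) :: l, ⟨hl, h1⟩, ?_, h3⟩
  intro op hop
  rcases List.mem_cons.1 hop with rfl | hop
  · exact hW
  · exact h2 op hop

/-- If the present vertices are pairwise nonadjacent, they can be treated in any order: nothing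
is ever shaded. -/
lemma good_of_indep (G : SimpleGraph V) (m : ℕ) : ∀ st : State V,
    (∑ v ∈ st.A, st.T v = m) → (∀ v ∈ st.A, 1 ≤ st.T v) →
    (∀ u ∈ st.A, ∀ v ∈ st.A, ¬ G.Adj u v) → Good G st := by
  induction m with
  | zero =>
    intro st hm hT _
    refine ⟨[], trivial, by simp, ?_⟩
    rw [finalState, List.foldl_nil, Finset.eq_empty_iff_forall_notMem]
    intro v hv
    have := (Finset.sum_eq_zero_iff.1 hm) v hv
    have := hT v hv
    omega
  | succ m ih =>
    intro st hm hT hI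
    obtain ⟨u, hu⟩ : st.A.Nonempty := by
      rw [Finset.nonempty_iff_ne_empty]
      intro h
      simp [h] at hm
    have hTu := hT u hu
    refine Good.step (u := u) (W := ∅) ⟨hu, by simp, ?_, ?_⟩ (by simp) (ih _ ?_ ?_ ?_)
    · rw [Finset.sum_empty]; omega
    · intro v hv hadj
      exact absurd hadj (hI u hu v hv)
    · have hsplit := Finset.add_sum_erase st.A st.T hu
      by_cases h1 : st.T u = 1
      · simp only [applyStep, h1, if_true, lt_irrefl, and_false, if_false]
        omega
      · have h2 : 1 < st.T u := by omega
        simp only [applyStep, h1, if_false, h2, and_true]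
        rw [← Finset.add_sum_erase _ _ hu, if_pos rfl]
        rw [Finset.sum_congr rfl (g := fun v => st.T v)
          (fun v hv => if_neg (Finset.ne_of_mem_erase hv))]
        omega
    · intro v hv
      have hv' : v ∈ st.A := by
        simp only [applyStep] at hv
        split_ifs at hv
        exacts [Finset.mem_of_mem_erase hv, hv]
      have := hT v hv'
      simp only [applyStep]
      split_ifs <;> omega
    · have hsub : ∀ v ∈ (applyStep G st u ∅).A, v ∈ st.A := by
        intro v hv
        simp only [applyStep] at hv
        split_ifs at hv
        exacts [Finset.mem_of_mem_erase hv, hv]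
      exact fun a ha b hb => hI a (hsub a ha) b (hsub b hb)

/-- The phase after the first round: `c` records the remaining targets on `X`, and the shield of
`v ∉ X` equals the remaining target of its successor `σ v`.  A vertex `u ∈ X` whose remaining
target is maximal may be treated while saving `σ u`, which preserves this description. -/
lemma good_mainPhase [Fintype V] (G : SimpleGraph V) (σ : V ≃ V) (X : V → Prop)
    (hadj : ∀ u v, G.Adj u v ↔ v = σ u ∨ u = σ v) (hX : ∀ v, X (σ v) ↔ ¬ X v)
    (hσ : ∀ v, σ (σ v) ≠ v) (t : ℕ) (ht : 1 ≤ t) (m : ℕ) : ∀ (c : V → ℕ) (st : State V),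
    (∑ v ∈ Finset.univ.filter X, c v = m) →
    (∀ v, v ∈ st.A ↔ (¬ X v ∨ 0 < c v)) →
    (∀ v, X v → 0 < c v → st.T v = c v ∧ st.S v = t + 1) →
    (∀ v, ¬ X v → st.T v = t ∧ st.S v = c (σ v)) → Good G st := by
  induction m with
  | zero =>
    intro c st hm hA _ hY
    have hc : ∀ v, X v → c v = 0 := fun v hv =>
      (Finset.sum_eq_zero_iff.1 hm) v (by simpa using hv)
    have hnX : ∀ v ∈ st.A, ¬ X v := by
      intro v hv hXv
      have := hc v hXv
      rcases (hA v).1 hv with h | h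
      · exact h hXv
      · omega
    refine good_of_indep G _ st rfl ?_ ?_
    · intro v hv
      rw [(hY v (hnX v hv)).1]
      exact ht
    · intro u hu v hv h
      have h1 := hnX u hu
      have h2 := hnX v hv
      rcases (hadj u v).1 h with h | h
      · exact h2 (h ▸ (hX u).2 h1)
      · exact h1 (h ▸ (hX v).2 h2)
  | succ m ih =>
    intro c st hm hA hXs hY
    have hne : (Finset.univ.filter X).Nonempty := by
      rw [Finset.nonempty_iff_ne_empty]
      intro h
      rw [h] at hm
      simp at hm
    obtain ⟨u, huX, humax⟩ := Finset.exists_max_image (Finset.univ.filter X) c hne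
    have hXu : X u := by simpa using huX
    have hcu : 0 < c u := by
      by_contra h0
      have : ∑ v ∈ Finset.univ.filter X, c v = 0 :=
        Finset.sum_eq_zero fun v hv => by have := humax v hv; omega
      omega
    have hσu : ¬ X (σ u) := fun h => (hX u).1 h hXu
    have hσσu : X (σ (σ u)) := (hX _).2 hσu
    have hle : c (σ (σ u)) ≤ c u := humax _ (by simpa using hσσu)
    obtain ⟨hTu, hSu⟩ := hXs u hXu hcu
    obtain ⟨hTy, hSy⟩ := hY (σ u) hσu
    have hnb : ∀ v, X v → ¬ G.Adj u v := by
      intro v hv h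
      rcases (hadj u v).1 h with h | h
      · exact hσu (h ▸ hv)
      · exact (hX v).1 (h ▸ hXu) hv
    refine Good.step (u := u) (W := {σ u}) ⟨(hA u).2 (Or.inr hcu), ?_, ?_, ?_⟩ (by simp)
      (ih (Function.update c u (c u - 1)) _ ?_ ?_ ?_ ?_)
    · intro w hw
      rw [Finset.mem_singleton] at hw
      subst hw
      exact ⟨(hA _).2 (Or.inl hσu), (hadj _ _).2 (Or.inl rfl)⟩
    · rw [Finset.sum_singleton]
      omega
    · intro v _ h hvW
      rw [Finset.mem_singleton] at hvW
      rcases (hadj u v).1 h with h' | h'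
      · exact absurd h' hvW
      · have hv : ¬ X v := fun hv => hnb v hv h
        rw [(hY v hv).2, ← h']
        exact hcu
    · rw [Finset.sum_update_of_mem huX]
      have := Finset.sum_sdiff (f := c) (Finset.singleton_subset_iff.2 huX)
      rw [Finset.sum_singleton] at this
      omega
    · intro v
      by_cases hvu : v = u
      · subst hvu
        by_cases h1 : c v = 1
        · simp [applyStep, hTu, h1, hXu]
        · have : 0 < c v - 1 := by omega
          simp [applyStep, hTu, h1, hXu, this, (hA v).2 (Or.inr hcu)]
      · rw [Function.update_of_ne hvu, ← hA v]
        simp only [applyStep]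
        split_ifs <;> simp [hvu]
    · intro v hv hcv
      have hn := hnb v hv
      by_cases hvu : v = u
      · subst hvu
        rw [Function.update_self] at hcv ⊢
        have h1 : 1 < c v := by omega
        simp [applyStep, hTu, h1, hSu]
      · rw [Function.update_of_ne hvu] at hcv ⊢
        obtain ⟨h1, h2⟩ := hXs v hv hcv
        simp [applyStep, hvu, hn, h1, h2]
    · intro v hv
      obtain ⟨h1, h2⟩ := hY v hv
      have hvu : v ≠ u := fun h => hv (h ▸ hXu)
      refine ⟨by simp [applyStep, hvu, h1], ?_⟩
      by_cases hs : σ v = u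
      · have hvs : v ≠ σ u := by
          intro h
          rw [h] at hs
          exact hσ u hs
        have hadj' : G.Adj u v := (hadj u v).2 (Or.inr hs.symm)
        simp [applyStep, hadj', (hA v).2 (Or.inl hv), hvs, h2, hs]
      · rw [Function.update_of_ne hs]
        have : ¬ (G.Adj u v ∧ v ∈ st.A ∧ v ∉ ({σ u} : Finset V)) := by
          rintro ⟨h, -, hw⟩
          rw [Finset.mem_singleton] at hw
          rcases (hadj u v).1 h with h | h
          · exact hw h
          · exact hs h.symm
        simp only [applyStep, if_neg this, h2]

/-- The first round, in which every vertex of `X` is treated once without saving; `P` is the set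
of vertices already treated. -/
lemma good_firstRound [Fintype V] (G : SimpleGraph V) (σ : V ≃ V) (X : V → Prop)
    (hadj : ∀ u v, G.Adj u v ↔ v = σ u ∨ u = σ v) (hX : ∀ v, X (σ v) ↔ ¬ X v)
    (hσ : ∀ v, σ (σ v) ≠ v) (t : ℕ) (ht : 2 ≤ t) (m : ℕ) : ∀ (P : Finset V) (st : State V),
    ((Finset.univ.filter X \ P).card = m) → (∀ v ∈ P, X v) →
    (∀ v, v ∈ st.A) →
    (∀ v, st.T v = if v ∈ P then t - 1 else t) →
    (∀ v, X v → st.S v = t + 1) →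
    (∀ v, ¬ X v → st.S v + (if σ v ∈ P then 1 else 0) + (if σ.symm v ∈ P then 1 else 0) = t + 1) →
    Good G st := by
  induction m with
  | zero =>
    intro P st hm hP hA hT hSx hSy
    have hXP : ∀ v, X v → v ∈ P := by
      intro v hv
      rw [Finset.card_eq_zero, Finset.sdiff_eq_empty_iff_subset] at hm
      exact hm (by simpa using hv)
    refine good_mainPhase G σ X hadj hX hσ t (by omega) _ (fun _ => t - 1) st rfl ?_ ?_ ?_
    · intro v
      exact ⟨fun _ => Or.inr (by omega), fun _ => hA v⟩
    · intro v hv _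
      exact ⟨by rw [hT v, if_pos (hXP v hv)], hSx v hv⟩
    · intro v hv
      have h1 : X (σ v) := (hX v).2 hv
      have h2 : X (σ.symm v) := by
        by_contra h
        have := (hX _).2 h
        rw [Equiv.apply_symm_apply] at this
        exact hv this
      have h3 := hSy v hv
      rw [if_pos (hXP _ h1), if_pos (hXP _ h2)] at h3
      refine ⟨by rw [hT v, if_neg fun h => hv (hP v h)], ?_⟩
      omega
  | succ m ih =>
    intro P st hm hP hA hT hSx hSy
    obtain ⟨u, hu⟩ : (Finset.univ.filter X \ P).Nonempty := by
      rw [← Finset.card_pos]; omega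
    obtain ⟨hXu, huP⟩ : X u ∧ u ∉ P := by simpa using hu
    have hTu : st.T u = t := by rw [hT u, if_neg huP]
    have hnb : ∀ v, G.Adj u v → ¬ X v := by
      intro v h hv
      rcases (hadj u v).1 h with h | h
      · exact (hX u).1 (h ▸ hv) hXu
      · exact (hX v).1 (h ▸ hXu) hv
    refine Good.step (u := u) (W := ∅) ⟨hA u, by simp, ?_, ?_⟩ (by simp)
      (ih (insert u P) _ ?_ ?_ ?_ ?_ ?_ ?_)
    · rw [Finset.sum_empty]; omega
    · intro v _ h _
      have h3 := hSy v (hnb v h)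
      split_ifs at h3 <;> omega
    · have : Finset.univ.filter X \ insert u P = (Finset.univ.filter X \ P).erase u := by
        ext v
        simp only [Finset.mem_sdiff, Finset.mem_insert, Finset.mem_erase]
        tauto
      rw [this, Finset.card_erase_of_mem hu]
      omega
    · intro v hv
      rcases Finset.mem_insert.1 hv with rfl | hv
      exacts [hXu, hP v hv]
    · intro v
      have : st.T u ≠ 1 := by omega
      simp only [applyStep, if_neg this, hA v]
    · intro v
      have h1 : 1 < t := by omega
      by_cases hvu : v = u
      · subst hvu
        simp [applyStep, hTu, h1]
      · simp [applyStep, hvu, hT v]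
    · intro v hv
      have : ¬ G.Adj u v := fun h => hnb v h hv
      simp [applyStep, this, hSx v hv]
    · intro v hv
      have h3 := hSy v hv
      simp only [Finset.mem_insert]
      -- The two neighbours of `v` are distinct, so `u` contributes to only one of the indicators.
      have hd : ¬ (σ v = u ∧ σ.symm v = u) := by
        rintro ⟨h1, h2⟩
        rw [Equiv.symm_apply_eq] at h2
        rw [h2] at h1
        exact hσ u h1
      by_cases h1 : σ v = u
      · have h2 : σ.symm v ≠ u := fun h => hd ⟨h1, h⟩
        have ha : G.Adj u v := (hadj u v).2 (Or.inr h1.symm)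
        simp only [applyStep, ha, hA v, Finset.notMem_empty, not_false_eq_true, and_self, if_true,
          h1, true_or, h2, false_or]
        rw [h1, if_neg huP] at h3
        split_ifs at h3 ⊢ <;> omega
      · by_cases h2 : σ.symm v = u
        · have ha : G.Adj u v := (hadj u v).2 (Or.inl ((Equiv.symm_apply_eq σ).1 h2))
          simp only [applyStep, ha, hA v, Finset.notMem_empty, not_false_eq_true, and_self,
            if_true, h1, false_or, h2, true_or]
          rw [h2, if_neg huP] at h3
          split_ifs at h3 ⊢ <;> omega
        · have ha : ¬ G.Adj u v := by
            intro h
            rcases (hadj u v).1 h with h | h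
            · exact h2 ((Equiv.symm_apply_eq σ).2 h)
            · exact h1 h.symm
          simp only [applyStep, ha, false_and, if_false, h1, h2, false_or]
          exact h3

/-- If both endpoints of an edge are present with each shield below the other's target, this
remains so along every legal sequence; in particular no such sequence is complete. -/
lemma not_deleted_of_edge (G : SimpleGraph V) {a b : V} (hab : G.Adj a b)
    (l : List (V × Finset V)) : ∀ st : State V, LegalSeq G st l →
    a ∈ st.A → b ∈ st.A → st.S a < st.T b → st.S b < st.T a → a ∈ (finalState G st l).A := by
  induction l with
  | nil => intro st _ ha _ _ _; exact ha
  | cons op rest ih =>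
    obtain ⟨u, W⟩ := op
    intro st hl ha hb h1 h2
    obtain ⟨⟨hu, hW, hsum, hS⟩, hrest⟩ := hl
    have hne : a ≠ b := hab.ne
    have hle : ∀ w ∈ W, st.S w + st.T w < st.S u + st.T u := fun w hw =>
      lt_of_le_of_lt (Finset.single_le_sum (f := fun w => st.S w + st.T w)
        (fun _ _ => Nat.zero_le _) hw) hsum
    -- The two endpoints play symmetric roles; `key` treats an operation at one of them.
    have key : ∀ x y, G.Adj x y → y ∈ st.A → st.S x < st.T y → st.S y < st.T x → u = x →
        1 < st.T x ∧ (applyStep G st u W).S y < (applyStep G st u W).T x ∧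
        (applyStep G st u W).S x < (applyStep G st u W).T y := by
      rintro x y hxy hy g1 g2 rfl
      have hyu : y ≠ u := hxy.ne'
      by_cases hyW : y ∈ W
      · have := hle y hyW
        have h3 : 1 < st.T u := by omega
        refine ⟨h3, ?_, ?_⟩
        · simp only [applyStep, hyW, not_true_eq_false, and_false, if_false, h3, and_self, if_true]
          omega
        · simp only [applyStep, G.irrefl, false_and, if_false, hyu]
          exact g1
      · have := hS y hy hxy hyW
        have h3 : 1 < st.T u := by omega
        refine ⟨h3, ?_, ?_⟩
        · simp only [applyStep, hyW, hxy, hy, not_false_eq_true, h3, and_self, if_true]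
          omega
        · simp only [applyStep, G.irrefl, false_and, if_false, hyu]
          exact g1
    have hmem : ∀ x ∈ st.A, (u = x → 1 < st.T x) → x ∈ (applyStep G st u W).A := by
      intro x hx h
      simp only [applyStep]
      split_ifs with h3
      · refine Finset.mem_erase.2 ⟨?_, hx⟩
        rintro rfl
        have := h rfl
        omega
      · exact hx
    have hSle : ∀ x, (applyStep G st u W).S x ≤ st.S x := by
      intro x
      simp only [applyStep]
      split_ifs <;> omega
    have hTeq : ∀ x, u ≠ x → (applyStep G st u W).T x = st.T x := by
      intro x hx
      simp [applyStep, hx.symm]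
    refine ih _ hrest (hmem a ha ?_) (hmem b hb ?_) ?_ ?_
    · exact fun h => (key a b hab hb h1 h2 h).1
    · exact fun h => (key b a hab.symm ha h2 h1 h).1
    · by_cases hua : u = a
      · exact (key a b hab hb h1 h2 hua).2.2
      · by_cases hub : u = b
        · exact (key b a hab.symm ha h2 h1 hub).2.1
        · rw [hTeq b hub]
          exact lt_of_le_of_lt (hSle a) h1
    · by_cases hua : u = a
      · exact (key a b hab hb h1 h2 hua).2.1
      · by_cases hub : u = b
        · exact (key b a hab.symm ha h2 h1 hub).2.2
        · rw [hTeq a hua]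
          exact lt_of_le_of_lt (hSle b) h2

lemma st4Deg_cycle (n : ℕ) (hn : Even n) (hn2 : 2 ≤ n) (t : ℕ) (ht : 2 ≤ t) :
    ST4Deg (SimpleGraph.cycleGraph (n + 2)) (fun _ => t + 1) (fun _ => t) := by
  refine good_firstRound (SimpleGraph.cycleGraph (n + 2)) (Equiv.addRight (1 : Fin (n + 2)))
    (fun v => Even v.val) ?_ ?_ ?_ t ht _ ∅ _ rfl (by simp) (by simp) (by simp) (by simp) (by simp)
  · intro u v
    rw [SimpleGraph.cycleGraph_adj]
    simp only [Equiv.coe_addRight]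
    rw [sub_eq_iff_eq_add, sub_eq_iff_eq_add, add_comm 1 v, add_comm 1 u]
    tauto
  · intro v
    have hv := v.isLt
    simp only [Equiv.coe_addRight, Fin.val_add, Fin.val_one]
    rw [Nat.even_iff] at hn
    rw [Nat.even_iff, Nat.even_iff]
    rcases Nat.lt_or_ge (v.val + 1) (n + 2) with h | h
    · rw [Nat.mod_eq_of_lt h]; omega
    · have : v.val + 1 = n + 2 := by omega
      rw [this, Nat.mod_self]; omega
  · intro v h
    simp only [Equiv.coe_addRight] at h
    rw [add_assoc] at h
    have h2 : (1 + 1 : Fin (n + 2)) = 0 := by simpa using h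
    have h3 := congrArg Fin.val h2
    rw [Fin.val_add, Fin.val_one, Nat.mod_eq_of_lt (by omega)] at h3
    simp at h3

/-- For every integer `r ≥ 2`, the even cycle `C_{2r}` satisfies
`ST⁽⁴⁾*(C_{2r}) = 2`. -/
theorem st4Star_even_cycle (r : ℕ) (hr : 2 ≤ r) :
    ST4Star (SimpleGraph.cycleGraph (2 * r)) = 2 := by
  obtain ⟨n, hn⟩ : ∃ n, 2 * r = n + 2 := ⟨2 * r - 2, by omega⟩
  rw [hn]
  have hn2 : 2 ≤ n := by omega
  have hne : Even n := by rw [Nat.even_iff]; omega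
  set B : Set ℝ := { x : ℝ | ∃ s t : ℕ, 1 ≤ t ∧
    ST4Deg (SimpleGraph.cycleGraph (n + 2)) (fun _ => s) (fun _ => t) ∧
    x = ((s : ℝ) + t) / t } with hB
  have hmem : ∀ t : ℕ, 2 ≤ t → 2 + 1 / (t : ℝ) ∈ B := by
    intro t ht
    refine ⟨t + 1, t, by omega, st4Deg_cycle n hne hn2 t ht, ?_⟩
    have : (t : ℝ) ≠ 0 := by positivity
    field_simp
    push_cast
    ring
  have hlow : ∀ x ∈ B, 2 ≤ x := by
    rintro x ⟨s, t, ht, ⟨l, hl, -, hfin⟩, rfl⟩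
    have hst : t ≤ s := by
      by_contra h
      have hab : (SimpleGraph.cycleGraph (n + 2)).Adj 0 1 := by
        rw [SimpleGraph.cycleGraph_adj]; simp
      have := not_deleted_of_edge _ hab l _ hl (by simp) (by simp) (by simpa using h)
        (by simpa using h)
      rw [hfin] at this
      simp at this
    have ht0 : (0 : ℝ) < t := by exact_mod_cast ht
    have hst' : (t : ℝ) ≤ s := by exact_mod_cast hst
    rw [le_div_iff₀ ht0]
    linarith
  change sInf B = 2
  refine le_antisymm (le_of_forall_pos_le_add fun ε hε => ?_) (le_csInf ⟨_, hmem 2 le_rfl⟩ hlow)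
  obtain ⟨k, hk⟩ := exists_nat_one_div_lt hε
  have hk2 : (1 : ℝ) / ((k + 2 : ℕ) : ℝ) ≤ 1 / ((k : ℝ) + 1) := by
    apply one_div_le_one_div_of_le (by positivity)
    push_cast
    linarith
  have := csInf_le ⟨2, hlow⟩ (hmem (k + 2) (by omega))
  linarith

end StrictDeg
end
end

section
/- For every integer r ≥ 1, the odd cycle C_{2r+1} satisfies ST^(4)*(C_{2r+1}) = 2 + 1/r. -/
/-!
Lower bound: a complete legal sequence is a recipe for a greedy multicolouring. Give each vertex
`v` a list of `S v + T v` colours. An operation at `u` saving `W` gives `u` a colour of its list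
that lies in no list of `W` (one exists because `S u + T u > ∑_{w ∈ W} (S w + T w)`), and deletes
it from the lists of the neighbours of `u`; only unsaved neighbours pay for this. So
`ST⁽⁴⁾`-`(s,t)`-degeneracy yields `t` colours out of `s + t` on each vertex, with adjacent vertices
receiving disjoint sets (`exists_multicoloring`). A colour class of `C_{2r+1}` is independent,
hence has at most `r` vertices, and `(2r+1) t ≤ r (s+t)` follows.

Upper bound: the pair `(s,t) = (r+1, r)` attains the infimum. A *round* starting at the vertex `i`
operates on `i, i+2, …, i+2r-2` in this order, the operation on `i+2k` with `k ≥ 1` saving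
`i+2k-1`, whose value of `S + T` is smaller by one at that moment. A round lowers `S + T` by
exactly one at every vertex: through `T` on the `r` operated vertices, through `S` on the `r+1`
others. The `2r+1` rounds, one for each starting vertex, form a complete legal sequence
(`plan_rounds`).
-/

open scoped Classical

noncomputable section

namespace StrictDeg

variable {V : Type}

/-! ### Greedy multicolouring from a legal sequence -/

/-- One colour `c` is spent on `u`; the lists `L'` are what remains after the operation, trimmed to
the exact size `S + T`. -/
lemma exists_color_step (G : SimpleGraph V) (st : State V) (u : V) (W : Finset V)
    (h : LegalStep G st u W) (hT : ∀ v ∈ st.A, 1 ≤ st.T v) (L : V → Finset ℕ)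
    (hL : ∀ v ∈ st.A, (L v).card = st.S v + st.T v) :
    ∃ c ∈ L u, ∃ L' : V → Finset ℕ, ∀ v ∈ (applyStep G st u W).A,
      L' v ⊆ L v ∧ (L' v).card = (applyStep G st u W).S v + (applyStep G st u W).T v ∧
      ((v = u ∨ G.Adj u v) → c ∉ L' v) := by
  obtain ⟨hu, hW, hsum, hpos⟩ := h
  have hlt : (W.biUnion L).card < (L u).card := by
    rw [hL u hu]
    refine lt_of_le_of_lt Finset.card_biUnion_le ?_
    rwa [Finset.sum_congr rfl (fun w hw => hL w (hW w hw).1)]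
  obtain ⟨c, hc, hcW⟩ := Finset.exists_mem_notMem_of_card_lt_card hlt
  refine ⟨c, hc, ?_⟩
  have key : ∀ v, ∃ X : Finset ℕ, v ∈ (applyStep G st u W).A →
      X ⊆ L v ∧ X.card = (applyStep G st u W).S v + (applyStep G st u W).T v ∧
      ((v = u ∨ G.Adj u v) → c ∉ X) := by
    intro v
    by_cases hv : v ∈ (applyStep G st u W).A
    swap
    · exact ⟨∅, fun h => absurd h hv⟩
    have hvA : v ∈ st.A := by
      simp only [applyStep] at hv
      split_ifs at hv
      · exact Finset.mem_of_mem_erase hv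
      · exact hv
    have hLv := hL v hvA
    have hTv := hT v hvA
    have herase := Finset.pred_card_le_card_erase (s := L v) (a := c)
    by_cases hvu : v = u
    · subst hvu
      have h1 : st.T v ≠ 1 := by
        intro h1
        simp [applyStep, h1] at hv
      obtain ⟨X, hX, hXc⟩ := Finset.exists_subset_card_eq
        (s := (L v).erase c) (n := st.S v + (st.T v - 1)) (by omega)
      refine ⟨X, fun _ => ⟨hX.trans (Finset.erase_subset _ _), ?_, fun _ hcX => ?_⟩⟩
      · have : 1 < st.T v := by omega
        simp [applyStep, this, hXc]
      · simpa using hX hcX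
    · by_cases ha : G.Adj u v
      · by_cases hvW : v ∈ W
        · refine ⟨L v, fun _ => ⟨subset_rfl, ?_, fun _ hcX => hcW ?_⟩⟩
          · simp [applyStep, hvu, hvW, hLv]
          · exact Finset.mem_biUnion.2 ⟨v, hvW, hcX⟩
        · have hp := hpos v hvA ha hvW
          obtain ⟨X, hX, hXc⟩ := Finset.exists_subset_card_eq
            (s := (L v).erase c) (n := st.S v - 1 + st.T v) (by omega)
          refine ⟨X, fun _ => ⟨hX.trans (Finset.erase_subset _ _), ?_, fun _ hcX => ?_⟩⟩
          · simp [applyStep, hvu, ha, hvA, hvW, hXc]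
          · simpa using hX hcX
      · refine ⟨L v, fun _ => ⟨subset_rfl, ?_, fun h => ?_⟩⟩
        · simp [applyStep, hvu, ha, hLv]
        · tauto
  choose L' hL' using key
  exact ⟨L', hL'⟩

/-- The colour sets `C v` are extended over the removed vertices by `∅`, so that in the induction
the set of a vertex removed by the current operation consists of the colour spent there. -/
lemma exists_multicoloring (G : SimpleGraph V) (l : List (V × Finset V)) :
    ∀ (st : State V), LegalSeq G st l → (finalState G st l).A = ∅ →
      (∀ v ∈ st.A, 1 ≤ st.T v) → ∀ L : V → Finset ℕ,
      (∀ v ∈ st.A, (L v).card = st.S v + st.T v) →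
      ∃ C : V → Finset ℕ, (∀ v ∈ st.A, C v ⊆ L v ∧ (C v).card = st.T v) ∧
        (∀ v ∉ st.A, C v = ∅) ∧ ∀ u v, G.Adj u v → Disjoint (C u) (C v) := by
  induction l with
  | nil =>
    intro st _ hA _ L _
    have hA' : st.A = ∅ := hA
    exact ⟨fun _ => ∅, by simp [hA'], by simp, by simp⟩
  | cons op l ih =>
    obtain ⟨u, W⟩ := op
    intro st ⟨hstep, hseq⟩ hfin hT L hL
    simp only at hstep hseq
    obtain ⟨c, hc, L', hL'⟩ := exists_color_step G st u W hstep hT L hL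
    have hu : u ∈ st.A := hstep.1
    have hsub : ∀ v, v ∈ (applyStep G st u W).A → v ∈ st.A := by
      intro v hv
      simp only [applyStep] at hv
      split_ifs at hv
      · exact Finset.mem_of_mem_erase hv
      · exact hv
    have hsup : ∀ v, v ≠ u → v ∈ st.A → v ∈ (applyStep G st u W).A := by
      intro v hvu hv
      simp only [applyStep]
      split_ifs
      · exact Finset.mem_erase.2 ⟨hvu, hv⟩
      · exact hv
    have hT' : ∀ v ∈ (applyStep G st u W).A, 1 ≤ (applyStep G st u W).T v := by
      intro v hv
      have := hT v (hsub v hv)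
      simp only [applyStep]
      split_ifs <;> omega
    obtain ⟨C, hC1, hC2, hC3⟩ := ih _ hseq hfin hT' L' (fun v hv => (hL' v hv).2.1)
    have hcC : ∀ v, (v = u ∨ G.Adj u v) → c ∉ C v := by
      intro v hv hcv
      by_cases hvA : v ∈ (applyStep G st u W).A
      · exact (hL' v hvA).2.2 hv ((hC1 v hvA).1 hcv)
      · simp [hC2 v hvA] at hcv
    refine ⟨Function.update C u (insert c (C u)), ?_, ?_, ?_⟩
    · intro v hv
      by_cases hvu : v = u
      · subst hvu
        simp only [Function.update_self]
        rw [Finset.card_insert_of_notMem (hcC v (Or.inl rfl))]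
        by_cases h1 : st.T v = 1
        · have : v ∉ (applyStep G st v W).A := by simp [applyStep, h1]
          simp [hC2 v this, h1, hc]
        · have hv' : v ∈ (applyStep G st v W).A := by simpa [applyStep, h1] using hv
          have hTv := hT v hv
          have h2 : 1 < st.T v := by omega
          refine ⟨Finset.insert_subset hc ((hC1 v hv').1.trans (hL' v hv').1), ?_⟩
          rw [(hC1 v hv').2]
          simp only [applyStep, h2, and_self, if_true]
          omega
      · have hv' := hsup v hvu hv
        simp only [Function.update_of_ne hvu]
        refine ⟨(hC1 v hv').1.trans (hL' v hv').1, ?_⟩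
        rw [(hC1 v hv').2]
        simp [applyStep, hvu]
    · intro v hv
      have hvu : v ≠ u := by rintro rfl; exact hv hu
      simp only [Function.update_of_ne hvu]
      exact hC2 v (fun h => hv (hsub v h))
    · intro a b hab
      by_cases ha : a = u
      · subst ha
        have hb : b ≠ a := hab.ne'
        simp only [Function.update_self, Function.update_of_ne hb]
        rw [Finset.disjoint_insert_left]
        exact ⟨hcC b (Or.inr hab), hC3 _ _ hab⟩
      · by_cases hb : b = u
        · subst hb
          simp only [Function.update_self, Function.update_of_ne ha]
          rw [Finset.disjoint_insert_right]
          exact ⟨hcC a (Or.inr hab.symm), hC3 _ _ hab⟩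
        · simp only [Function.update_of_ne ha, Function.update_of_ne hb]
          exact hC3 _ _ hab

/-! ### The lower bound for odd cycles -/

/-- An independent set `I` is disjoint from its rotation `I + 1`. -/
lemma indep_card_le (r : ℕ) (hr : 1 ≤ r) (I : Finset (Fin (2 * r + 1)))
    (hI : ∀ u ∈ I, ∀ v ∈ I, ¬ (SimpleGraph.cycleGraph (2 * r + 1)).Adj u v) : I.card ≤ r := by
  have hd : Disjoint I (I.image (· + 1)) := by
    rw [Finset.disjoint_left]
    intro v hv hv'
    obtain ⟨u, hu, rfl⟩ := Finset.mem_image.1 hv'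
    refine hI u hu _ hv ?_
    rw [SimpleGraph.cycleGraph_adj']
    right
    rw [add_sub_cancel_left, Fin.val_one']
    exact Nat.mod_eq_of_lt (by omega)
  have h1 := Finset.card_le_univ (I ∪ I.image (· + 1))
  rw [Finset.card_union_of_disjoint hd,
    Finset.card_image_of_injective _ (add_left_injective 1), Fintype.card_fin] at h1
  omega

lemma lower_bound (r : ℕ) (hr : 1 ≤ r) (s t : ℕ) (ht : 1 ≤ t)
    (h : ST4Deg (SimpleGraph.cycleGraph (2 * r + 1)) (fun _ => s) (fun _ => t)) :
    (2 * r + 1) * t ≤ (s + t) * r := by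
  obtain ⟨l, hl, -, hfin⟩ := h
  obtain ⟨C, hC1, -, hC3⟩ := exists_multicoloring _ l _ hl hfin (fun _ _ => ht)
    (fun _ => Finset.range (s + t)) (by simp)
  have e1 : ∑ v : Fin (2 * r + 1), (C v).card = (2 * r + 1) * t := by
    rw [Finset.sum_congr rfl (fun v _ => (hC1 v (Finset.mem_univ v)).2)]
    simp
  have e2 : ∑ v : Fin (2 * r + 1), (C v).card
      = ∑ c ∈ Finset.range (s + t), (Finset.univ.filter (fun v => c ∈ C v)).card := by
    have := Finset.sum_card_bipartiteAbove_eq_sum_card_bipartiteBelow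
      (s := (Finset.univ : Finset (Fin (2 * r + 1)))) (t := Finset.range (s + t))
      (fun v c => c ∈ C v)
    rw [Finset.sum_congr rfl (fun v _ => ?_)]
    · exact this
    · congr 1
      ext c
      simp only [Finset.mem_bipartiteAbove]
      exact ⟨fun hc => ⟨(hC1 v (Finset.mem_univ v)).1 hc, hc⟩, fun hc => hc.2⟩
  rw [← e1, e2]
  refine (Finset.sum_le_card_nsmul _ _ r (fun c _ => ?_)).trans (by simp)
  refine indep_card_le r hr _ (fun u hu v hv hadj => ?_)
  simp only [Finset.mem_filter, Finset.mem_univ, true_and] at hu hv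
  exact Finset.disjoint_left.1 (hC3 u v hadj) hu hv

/-! ### Planned shields and targets -/

/-- `Matches st S T`: the state `st` realises the planned shield `S` and target `T`. In a plan a
removed vertex has target `0`; the values of `st` at removed vertices are irrelevant. -/
def Matches (st : State V) (S T : V → ℕ) : Prop :=
  (∀ v, v ∈ st.A ↔ 0 < T v) ∧ ∀ v ∈ st.A, st.S v = S v ∧ st.T v = T v

/-- Every state realising the plan `(S, T)` admits a complete restricted legal sequence. -/
def Plan (G : SimpleGraph V) (S T : V → ℕ) : Prop :=
  ∀ st : State V, Matches st S T → ∃ l : List (V × Finset V),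
    LegalSeq G st l ∧ (∀ op ∈ l, op.2.card ≤ 1) ∧ (finalState G st l).A = ∅

/-- A planned operation at `u` saving `W`. Removed vertices are dropped from `W` when the operation
is carried out. -/
lemma plan_step (G : SimpleGraph V) (S T S' T' : V → ℕ) (u : V) (W : Finset V)
    (hW : W.card ≤ 1) (hWadj : ∀ w ∈ W, G.Adj u w)
    (hsave : ∀ w ∈ W, S w + T w < S u + T u)
    (hTu : T u = T' u + 1) (hTv : ∀ v, v ≠ u → T v = T' v)
    (hS : ∀ v, G.Adj u v → v ∉ W → S v = S' v + 1)
    (hS' : ∀ v, (¬ G.Adj u v ∨ v ∈ W) → S v = S' v)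
    (h : Plan G S' T') : Plan G S T := by
  intro st ⟨hA, hval⟩
  have hu : u ∈ st.A := (hA u).2 (by omega)
  set W' := W.filter (· ∈ st.A) with hW'
  have hstep : LegalStep G st u W' := by
    refine ⟨hu, fun w hw => ?_, ?_, fun v hv ha hvW => ?_⟩
    · rw [hW', Finset.mem_filter] at hw
      exact ⟨hw.2, hWadj w hw.1⟩
    · rw [(hval u hu).1, (hval u hu).2]
      have hc : W'.card ≤ 1 := (Finset.card_filter_le _ _).trans hW
      rcases Nat.le_one_iff_eq_zero_or_eq_one.1 hc with h0 | h0
      · rw [Finset.card_eq_zero.1 h0, Finset.sum_empty]; omega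
      · obtain ⟨w, h0⟩ := Finset.card_eq_one.1 h0
        have hm : w ∈ W' := by simp [h0]
        rw [h0, Finset.sum_singleton]
        rw [hW', Finset.mem_filter] at hm
        rw [(hval w hm.2).1, (hval w hm.2).2]
        exact hsave w hm.1
    · rw [(hval v hv).1, hS v ha (fun hh => hvW (Finset.mem_filter.2 ⟨hh, hv⟩))]
      omega
  have hm : Matches (applyStep G st u W') S' T' := by
    have hTu' := (hval u hu).2
    have hmem : ∀ v, v ∈ (applyStep G st u W').A ↔ v ∈ st.A ∧ (v = u → st.T u ≠ 1) := by
      intro v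
      simp only [applyStep]
      split_ifs with h1
      · rw [Finset.mem_erase]; tauto
      · tauto
    refine ⟨fun v => ?_, fun v hv => ?_⟩
    · rw [hmem, hA v]
      by_cases hvu : v = u
      · subst hvu
        simp only [forall_const]
        omega
      · simp [hvu, hTv v hvu]
    · obtain ⟨hvA, hv1⟩ := (hmem v).1 hv
      obtain ⟨hs, ht⟩ := hval v hvA
      constructor
      · simp only [applyStep]
        by_cases ha : G.Adj u v
        · by_cases hvW : v ∈ W
          · have : v ∈ W' := Finset.mem_filter.2 ⟨hvW, hvA⟩
            simp [this, hs, hS' v (Or.inr hvW)]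
          · have : v ∉ W' := fun hh => hvW (Finset.mem_filter.1 hh).1
            simp [this, ha, hvA, hs, hS v ha hvW]
        · simp [ha, hs, hS' v (Or.inl ha)]
      · simp only [applyStep]
        by_cases hvu : v = u
        · subst hvu
          have := hv1 rfl
          have h2 : 1 < st.T v := by omega
          simp only [h2, and_self, if_true]
          omega
        · simp [hvu, ht, hTv v hvu]
  obtain ⟨l, hl1, hl2, hl3⟩ := h _ hm
  refine ⟨(u, W') :: l, ⟨hstep, hl1⟩, ?_, hl3⟩
  intro op hop
  rcases List.mem_cons.1 hop with rfl | hop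
  · exact (Finset.card_filter_le _ _).trans hW
  · exact hl2 op hop

lemma plan_zero (G : SimpleGraph V) (S T : V → ℕ) (hT : ∀ v, T v = 0) : Plan G S T := by
  intro st ⟨hA, _⟩
  refine ⟨[], trivial, by simp, ?_⟩
  refine Finset.eq_empty_of_forall_notMem (fun v hv => ?_)
  have := (hA v).1 hv
  simp [hT v] at this

/-! ### Rounds on the odd cycle -/

/-- A vertex at offset `j` from the start of a round is operated on in that round. -/
def Operated (r j : ℕ) : Prop := j % 2 = 0 ∧ j < 2 * r

/-- After `k` operations of a round, the vertices whose `S + T` is still to be lowered in that round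
are those at offset `j` with `Pending r k j`. -/
def Pending (r k j : ℕ) : Prop := k = 0 ∨ (2 * k ≤ j ∧ j < 2 * r)

/-- Offset of `v` from `i` in the positive direction around the cycle. -/
def offset {n : ℕ} (i v : Fin n) : ℕ := (v - i).val

/-- Target still needed at `v` for full rounds started at the vertices of `L`. -/
def roundT (r : ℕ) (L : List (Fin (2 * r + 1))) (v : Fin (2 * r + 1)) : ℕ :=
  L.countP (fun i => Operated r (offset i v))

/-- Shield still needed at `v` for full rounds started at the vertices of `L`. -/
def roundS (r : ℕ) (L : List (Fin (2 * r + 1))) (v : Fin (2 * r + 1)) : ℕ :=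
  L.countP (fun i => ¬ Operated r (offset i v))

lemma roundS_add_roundT (r : ℕ) (L : List (Fin (2 * r + 1))) (v : Fin (2 * r + 1)) :
    roundS r L v + roundT r L v = L.length := by
  have := List.length_eq_countP_add_countP (fun i => decide (Operated r (offset i v))) (l := L)
  simp only [roundS, roundT]
  rw [this, add_comm]
  congr 1
  apply List.countP_congr
  simp

lemma offset_lt {r : ℕ} (i v : Fin (2 * r + 1)) : offset i v < 2 * r + 1 := (v - i).isLt

lemma offset_inj {n : ℕ} [NeZero n] (i u v : Fin n) (h : offset i u = offset i v) : u = v :=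
  sub_left_injective (Fin.ext h)

/-- Adjacency in the odd cycle in terms of offsets. -/
lemma adj_iff_offset (r : ℕ) (hr : 1 ≤ r) (i u v : Fin (2 * r + 1)) :
    (SimpleGraph.cycleGraph (2 * r + 1)).Adj u v ↔
      offset i u + 1 = offset i v ∨ offset i v + 1 = offset i u ∨
      (offset i u = 0 ∧ offset i v = 2 * r) ∨ (offset i u = 2 * r ∧ offset i v = 0) := by
  have hu : u - v = (u - i) - (v - i) := by abel
  have hv : v - u = (v - i) - (u - i) := by abel
  rw [SimpleGraph.cycleGraph_adj', hu, hv]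
  unfold offset
  generalize u - i = a
  generalize v - i = b
  have key : ∀ x y : Fin (2 * r + 1), (x - y).val = 1 ↔
      (y.val + 1 = x.val ∨ (y.val = 2 * r ∧ x.val = 0)) := by
    intro x y
    have hx := x.isLt
    have hy := y.isLt
    rcases le_or_gt y x with h | h
    · have h' : y.val ≤ x.val := h
      rw [Fin.sub_val_of_le h]
      omega
    · have h' : x.val < y.val := h
      rw [Fin.coe_sub_iff_lt.2 h]
      omega
  rw [key, key]
  omega

/-- If the plan `(S, T)`, with constant sum `S + T`, can be completed, then so can the plan that
first needs the operations number `k, …, r - 1` of a round started at `i`. The parameter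
`d = r - k` counts these operations. -/
lemma plan_round (r : ℕ) (hr : 1 ≤ r) (i : Fin (2 * r + 1)) (S T : Fin (2 * r + 1) → ℕ) (m : ℕ)
    (hm : ∀ v, S v + T v = m) (h : Plan (SimpleGraph.cycleGraph (2 * r + 1)) S T) (d : ℕ) :
    ∀ k, k + d = r → Plan (SimpleGraph.cycleGraph (2 * r + 1))
      (fun v => S v + if ¬ Operated r (offset i v) ∧ Pending r k (offset i v) then 1 else 0)
      (fun v => T v + if Operated r (offset i v) ∧ Pending r k (offset i v) then 1 else 0) := by
  induction d with
  | zero =>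
    intro k hk
    have hno : ∀ j, ¬ Pending r k j := by
      intro j hj
      simp only [Pending] at hj
      omega
    simpa [hno] using h
  | succ d ih =>
    intro k hk
    have hkr : k < r := by omega
    have hn : 2 * k < 2 * r + 1 := by omega
    obtain ⟨u, hu⟩ : ∃ u : Fin (2 * r + 1), offset i u = 2 * k :=
      ⟨⟨2 * k, hn⟩ + i, by simp [offset]⟩
    -- the saved set: the vertex at offset `2k - 1`, empty for `k = 0`
    refine plan_step _ _ _ _ _ u (Finset.univ.filter (fun w => offset i w + 1 = 2 * k))
      ?_ ?_ ?_ ?_ ?_ ?_ ?_ (ih (k + 1) (by omega))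
    · rw [Finset.card_le_one]
      intro a ha b hb
      simp only [Finset.mem_filter, Finset.mem_univ, true_and] at ha hb
      exact offset_inj i a b (by omega)
    · intro w hw
      simp only [Finset.mem_filter, Finset.mem_univ, true_and] at hw
      rw [adj_iff_offset r hr i]
      omega
    · intro w hw
      simp only [Finset.mem_filter, Finset.mem_univ, true_and] at hw
      have h1 := hm u
      have h2 := hm w
      split_ifs <;> simp only [Operated, Pending] at * <;> omega
    · split_ifs <;> simp only [Operated, Pending] at * <;> omega
    · intro v hv
      have : offset i v ≠ 2 * k := fun hh => hv (offset_inj i _ _ (hh.trans hu.symm))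
      have := offset_lt i v
      split_ifs <;> simp only [Operated, Pending] at * <;> omega
    · intro v hv hvW
      simp only [Finset.mem_filter, Finset.mem_univ, true_and] at hvW
      rw [adj_iff_offset r hr i] at hv
      have := offset_lt i v
      split_ifs <;> simp only [Operated, Pending] at * <;> omega
    · intro v hv
      simp only [Finset.mem_filter, Finset.mem_univ, true_and] at hv
      rw [adj_iff_offset r hr i] at hv
      have := offset_lt i v
      split_ifs <;> simp only [Operated, Pending] at * <;> omega

lemma plan_rounds (r : ℕ) (hr : 1 ≤ r) (L : List (Fin (2 * r + 1))) :
    Plan (SimpleGraph.cycleGraph (2 * r + 1)) (roundS r L) (roundT r L) := by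
  induction L with
  | nil => exact plan_zero _ _ _ (by simp [roundT])
  | cons i L ih =>
    have := plan_round r hr i _ _ _ (roundS_add_roundT r L) ih r 0 (by omega)
    convert this using 1
    · ext v
      simp [roundS, List.countP_cons, Pending]
    · ext v
      simp [roundT, List.countP_cons, Pending]

/-- Over one round per starting vertex, each vertex is operated on `r` times. -/
lemma roundT_finRange (r : ℕ) (v : Fin (2 * r + 1)) :
    roundT r (List.finRange (2 * r + 1)) v = r := by
  have h1 : roundT r (List.finRange (2 * r + 1)) v
      = (Finset.univ.filter (fun i => Operated r (offset i v))).card := by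
    rw [roundT, List.countP_eq_length_filter, Finset.card_def, Finset.filter_val]
    rfl
  rw [h1]
  -- the operated offsets are `2j` for `j < r`, reached from the starting vertex `v - 2j`
  have h2 : (Finset.univ.filter (fun i => Operated r (offset i v))).card
      = (Finset.range r).card := by
    refine Finset.card_bij' (fun i _ => offset i v / 2)
      (fun j _ => v - Fin.ofNat (2 * r + 1) (2 * j)) ?_ ?_ ?_ ?_
    · intro i hi
      obtain ⟨-, hi1, hi2⟩ := Finset.mem_filter.1 hi
      simp only [Finset.mem_range]
      omega
    · intro j hj
      simp only [Finset.mem_range] at hj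
      have : 2 * j % (2 * r + 1) = 2 * j := Nat.mod_eq_of_lt (by omega)
      refine Finset.mem_filter.2 ⟨Finset.mem_univ _, ?_⟩
      simp only [Operated, offset, sub_sub_cancel, Fin.val_ofNat, this]
      omega
    · intro i hi
      obtain ⟨-, hi1, hi2⟩ := Finset.mem_filter.1 hi
      have h3 : 2 * (offset i v / 2) = offset i v := by omega
      have h4 : Fin.ofNat (2 * r + 1) (offset i v) = v - i := by
        ext
        simp [offset]
      simp only [h3, h4, sub_sub_cancel]
    · intro j hj
      simp only [Finset.mem_range] at hj
      have : 2 * j % (2 * r + 1) = 2 * j := Nat.mod_eq_of_lt (by omega)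
      simp only [offset, sub_sub_cancel, Fin.val_ofNat, this]
      omega
  rw [h2, Finset.card_range]

lemma upper_bound (r : ℕ) (hr : 1 ≤ r) :
    ST4Deg (SimpleGraph.cycleGraph (2 * r + 1)) (fun _ => r + 1) (fun _ => r) := by
  refine plan_rounds r hr (List.finRange (2 * r + 1)) _ ⟨fun v => ?_, fun v _ => ?_⟩
  · rw [roundT_finRange]
    exact ⟨fun _ => hr, fun _ => Finset.mem_univ v⟩
  · have h1 := roundT_finRange r v
    have h2 := roundS_add_roundT r (List.finRange (2 * r + 1)) v
    rw [List.length_finRange] at h2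
    constructor
    · change r + 1 = _
      omega
    · exact h1.symm

/-- For every integer `r ≥ 1`, the odd cycle `C_{2r+1}` satisfies
`ST⁽⁴⁾*(C_{2r+1}) = 2 + 1/r`. -/
theorem st4Star_odd_cycle (r : ℕ) (hr : 1 ≤ r) :
    ST4Star (SimpleGraph.cycleGraph (2 * r + 1)) = 2 + 1 / (r : ℝ) := by
  have hr0 : (0 : ℝ) < r := by exact_mod_cast hr
  refine IsLeast.csInf_eq ⟨⟨r + 1, r, hr, upper_bound r hr, ?_⟩, ?_⟩
  · push_cast
    field_simp
    ring
  · rintro x ⟨s, t, ht, hdeg, rfl⟩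
    have ht0 : (0 : ℝ) < t := by exact_mod_cast ht
    have h : ((2 * r + 1) * t : ℝ) ≤ (s + t) * r := by
      exact_mod_cast lower_bound r hr s t ht hdeg
    have e : 2 + 1 / (r : ℝ) = (2 * r + 1) / r := by
      field_simp
    rw [e, div_le_div_iff₀ hr0 ht0]
    exact h

end StrictDeg
end
end

section
/- For all integers m, n with 2 ≤ m ≤ n, the complete bipartite graph K_{m,n} satisfies ST^(4)*(K_{m,n}) ≤ m + 1 − m/n. -/
/-!
Shade the vertices of the part of size `m` first. With shield `m(n-1)k + mn` and target
`n(k+1)`, the first `n` shadings of each of them save nothing; each of the following `k` sweeps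
shades every one of them `n` times, and each such run of `n` shadings saves every vertex of the
other part exactly once (`WinB.of_saved_run`). A sweep thus lowers the targets on one side by `n`
and the shields on the other side by `m(n-1) ≥ n`, so the lead in `S + T` gained by the unsaved
shadings is never lost and all the savings are legal. When the first part is exhausted all shields
on the other part are exactly `0`, and the remaining graph has no edges (`win_of_indep`).

The ratio obtained is `m + 1 - m/n + m/(n(k+1))`, and letting `k → ∞` gives the bound.
-/

open scoped Classical

noncomputable section

namespace StrictDeg

variable {V : Type}

/-- The induced subgraph described by `st` can be emptied by a restricted legal sequence. -/
def Win (G : SimpleGraph V) (st : State V) : Prop := ST4DegOn G st.A st.S st.T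

lemma Win.of_step {G : SimpleGraph V} {st : State V} (u : V) (W : Finset V)
    (hleg : LegalStep G st u W) (hW : W.card ≤ 1) (h : Win G (applyStep G st u W)) :
    Win G st := by
  obtain ⟨l, h1, h2, h3⟩ := h
  refine ⟨(u, W) :: l, ⟨hleg, h1⟩, ?_, h3⟩
  intro op hop
  rcases List.mem_cons.1 hop with rfl | hop
  · exact hW
  · exact h2 op hop

/-- If no two active vertices are adjacent, the active vertices can be shaded one after the
other without saving, so no shield is needed. -/
lemma win_of_indep (G : SimpleGraph V) (N : ℕ) : ∀ st : State V,
    (∀ u ∈ st.A, ∀ v ∈ st.A, ¬ G.Adj u v) → (∀ u ∈ st.A, 1 ≤ st.T u) →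
    ∑ u ∈ st.A, st.T u ≤ N → Win G st := by
  induction N with
  | zero =>
    intro st hind hT hN
    refine ⟨[], trivial, by simp, ?_⟩
    change st.A = ∅
    refine Finset.eq_empty_of_forall_notMem fun u hu => ?_
    have h1 := hT u hu
    have h2 := Finset.single_le_sum (f := st.T) (fun _ _ => Nat.zero_le _) hu
    omega
  | succ N ih =>
    intro st hind hT hN
    rcases st.A.eq_empty_or_nonempty with hA | ⟨u, hu⟩
    · exact ⟨[], trivial, by simp, hA⟩
    have hTu := hT u hu
    refine Win.of_step u ∅ ⟨hu, by simp, by simp; omega, fun v hv hadj => absurd hadj (hind u hu v hv)⟩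
      (by simp) (ih _ ?_ ?_ ?_)
    · have hsub : (applyStep G st u ∅).A ⊆ st.A := by
        unfold applyStep
        dsimp only
        split_ifs
        · exact Finset.erase_subset _ _
        · exact subset_rfl
      exact fun a ha b hb => hind a (hsub ha) b (hsub hb)
    · intro v hv
      unfold applyStep at hv ⊢
      dsimp only at hv ⊢
      have hvA : v ∈ st.A := by
        split_ifs at hv
        · exact Finset.mem_of_mem_erase hv
        · exact hv
      split_ifs with h
      · omega
      · exact hT v hvA
    · have key := Finset.add_sum_erase st.A st.T hu
      unfold applyStep
      dsimp only
      by_cases h1 : st.T u = 1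
      · simp only [h1, if_true, lt_irrefl, and_false, if_false]
        omega
      · have h2 : 1 < st.T u := by omega
        simp only [h1, if_false, h2, and_true]
        rw [← Finset.add_sum_erase st.A _ hu]
        have : ∑ x ∈ st.A.erase u, (if x = u then st.T u - 1 else st.T x)
            = ∑ x ∈ st.A.erase u, st.T x :=
          Finset.sum_congr rfl fun x hx => if_neg (Finset.ne_of_mem_erase hx)
        rw [this, if_pos rfl]
        omega

/-- The states of `K_{m,n}` in which only vertices of the part `Fin m` have been shaded:
`τ i` is the number of shadings still owed to the vertex `i` of `Fin m`, where `τ i = 0` means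
that `i` has been deleted (the process leaves the target of a deleted vertex at `1`), and `σ j`
is the shield of the vertex `j` of `Fin n`. Shields on `Fin m` are still `s`, targets on
`Fin n` are still `t`. -/
def enc {m n : ℕ} (s t : ℕ) (τ : Fin m → ℕ) (σ : Fin n → ℕ) : State (Fin m ⊕ Fin n) where
  A := Finset.univ.filter (Sum.elim (fun i => 0 < τ i) (fun _ => True))
  S := Sum.elim (fun _ => s) σ
  T := Sum.elim (fun i => max (τ i) 1) (fun _ => t)

section Bipartite

variable {m n s t : ℕ}

/-- `WinB s t τ σ` says that the state `enc s t τ σ` of `K_{m,n}` can be emptied. -/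
def WinB (s t : ℕ) (τ : Fin m → ℕ) (σ : Fin n → ℕ) : Prop :=
  Win (completeBipartiteGraph (Fin m) (Fin n)) (enc s t τ σ)

lemma applyStep_enc (τ : Fin m → ℕ) (σ : Fin n → ℕ) (i : Fin m) (hi : 0 < τ i)
    (W : Finset (Fin m ⊕ Fin n)) :
    applyStep (completeBipartiteGraph (Fin m) (Fin n)) (enc s t τ σ) (Sum.inl i) W
      = enc s t (Function.update τ i (τ i - 1))
          (fun j => if Sum.inr j ∈ W then σ j else σ j - 1) := by
  unfold applyStep enc
  simp only [State.mk.injEq]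
  refine ⟨?_, ?_, ?_⟩
  · have hmax : max (τ i) 1 = 1 ↔ τ i = 1 := by omega
    ext v
    simp only [Sum.elim_inl, hmax]
    rcases v with v | v
    · by_cases hv : v = i
      · subst hv
        split_ifs with h
        · simp [h]
        · simp
          omega
      · split_ifs with h <;> simp [hv]
    · split_ifs with h <;> simp
  · funext v
    rcases v with v | v
    · simp
    · by_cases h : Sum.inr v ∈ W <;> simp [h]
  · funext v
    rcases v with v | v
    · by_cases hv : v = i
      · subst hv
        simp
        split_ifs <;> omega
      · simp [hv]
    · simp

lemma WinB.of_unsaved {τ : Fin m → ℕ} {σ : Fin n → ℕ} (i : Fin m) (hi : 0 < τ i)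
    (hσ : ∀ j, 1 ≤ σ j)
    (h : WinB s t (Function.update τ i (τ i - 1)) (fun j => σ j - 1)) : WinB s t τ σ := by
  refine Win.of_step (Sum.inl i) ∅ ⟨?_, by simp, ?_, ?_⟩ (by simp) ?_
  · simpa [enc] using hi
  · simp [enc]
  · rintro (v | v) _ hadj _
    · simp at hadj
    · simpa [enc] using hσ v
  · rw [applyStep_enc τ σ i hi]
    simpa [WinB] using h

lemma WinB.of_saved {τ : Fin m → ℕ} {σ : Fin n → ℕ} (i : Fin m) (j : Fin n) (hi : 0 < τ i)
    (hσ : ∀ j', j' ≠ j → 1 ≤ σ j') (hlt : σ j + t < s + τ i)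
    (h : WinB s t (Function.update τ i (τ i - 1)) (fun j' => if j' = j then σ j' else σ j' - 1)) :
    WinB s t τ σ := by
  refine Win.of_step (Sum.inl i) {Sum.inr j} ⟨?_, ?_, ?_, ?_⟩ (by simp) ?_
  · simpa [enc] using hi
  · simp [enc]
  · simp [enc]
    omega
  · rintro (v | v) _ hadj hv
    · simp at hadj
    · simpa [enc] using hσ v (by simpa using hv)
  · rw [applyStep_enc τ σ i hi]
    simpa [WinB] using h

/-- `d` shadings of the vertex `i`, none of them saving. -/
lemma WinB.of_unsaved_run (i : Fin m) (a x : ℕ) (d : ℕ) (τ : Fin m → ℕ) (hτ : τ i = a + d)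
    (h : WinB s t (Function.update τ i a) (fun _ : Fin n => x)) :
    WinB s t τ (fun _ : Fin n => x + d) := by
  induction d generalizing τ with
  | zero =>
    have : Function.update τ i a = τ := by rw [← Nat.add_zero a, ← hτ]; simp
    rw [this] at h
    exact h
  | succ d ih =>
    refine WinB.of_unsaved i (by omega) (fun _ => by omega) ?_
    exact ih _ (by simp; omega) (by simpa using h)

/-- The last `p` shadings of a run of `n` shadings of `i` that saves each vertex of `Fin n` once,
in decreasing order: the vertices `j < p` are still to be saved, so their shield is one below that
of the vertices already saved. -/
lemma WinB.of_saved_run_aux (i : Fin m) (a x : ℕ) (hx : x + t ≤ s + a) (p : ℕ) (hp : p ≤ n)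
    (τ : Fin m → ℕ) (hτ : τ i = a + p)
    (h : WinB s t (Function.update τ i a) (fun _ : Fin n => x)) :
    WinB s t τ (fun j : Fin n => if (j : ℕ) < p then x + p - 1 else x + p) := by
  induction p generalizing τ with
  | zero =>
    have : Function.update τ i a = τ := by rw [← Nat.add_zero a, ← hτ]; simp
    rw [this] at h
    simpa using h
  | succ p ih =>
    refine WinB.of_saved i ⟨p, hp⟩ (by omega) ?_ ?_ ?_
    · intro j hj
      have : (j : ℕ) ≠ p := fun h => hj (Fin.ext h)
      split_ifs <;> omega
    · simp
      omega
    · have := ih (by omega) (Function.update τ i (τ i - 1)) (by simp; omega) (by simpa using h)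
      convert this using 2 with j
      simp only [Fin.ext_iff]
      split_ifs <;> omega

/-- `n` shadings of the vertex `i`, each vertex of `Fin n` being saved once. -/
lemma WinB.of_saved_run (i : Fin m) (a x : ℕ) (hx : x + t ≤ s + a) (hn : 1 ≤ n)
    (τ : Fin m → ℕ) (hτ : τ i = a + n)
    (h : WinB s t (Function.update τ i a) (fun _ : Fin n => x)) :
    WinB s t τ (fun _ : Fin n => x + (n - 1)) := by
  have := WinB.of_saved_run_aux i a x hx n le_rfl τ hτ h
  convert this using 2 with j
  rw [if_pos j.2]
  omega

/-- If a run at a single vertex of `Fin m` lowers what it owes by `d` and the shields on `Fin n`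
by `e`, performing it once at every vertex of `Fin m` lowers them by `d` and `m * e`. -/
lemma WinB.of_sweep (a y d e : ℕ)
    (hrun : ∀ (i : Fin m) (x : ℕ) (τ : Fin m → ℕ), τ i = a + d → x + e ≤ y + m * e →
      WinB s t (Function.update τ i a) (fun _ : Fin n => x) →
      WinB s t τ (fun _ : Fin n => x + e))
    (h : WinB s t (fun _ : Fin m => a) (fun _ : Fin n => y)) :
    WinB s t (fun _ : Fin m => a + d) (fun _ : Fin n => y + m * e) := by
  have key : ∀ q : ℕ, q ≤ m →
      WinB s t (fun i : Fin m => if (i : ℕ) < q then a + d else a) (fun _ : Fin n => y + q * e) := by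
    intro q
    induction q with
    | zero => intro _; simpa using h
    | succ q ih =>
      intro hq
      have hle : (q + 1) * e ≤ m * e := Nat.mul_le_mul_right _ hq
      have := hrun ⟨q, hq⟩ (y + q * e) (fun i : Fin m => if (i : ℕ) < q + 1 then a + d else a)
        (by simp) (by rw [add_mul] at hle; omega) ?_
      · convert this using 2
        ring
      · convert ih (by omega) using 1
        funext i
        by_cases hi : i = ⟨q, hq⟩
        · subst hi; simp
        · have : (i : ℕ) ≠ q := fun h => hi (Fin.ext h)
          rw [Function.update_of_ne hi]
          split_ifs <;> omega
  convert key m le_rfl using 2 with i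
  simp

lemma winB_zero (ht : 1 ≤ t) : WinB s t (fun _ : Fin m => 0) (fun _ : Fin n => 0) := by
  refine win_of_indep _ _ _ ?_ ?_ le_rfl
  · rintro (u | u) hu (v | v) hv <;> simp_all [enc]
  · rintro (u | u) hu <;> simp_all [enc]

end Bipartite

lemma st4Deg_completeBipartite (m n k : ℕ) (hm : 2 ≤ m) (hmn : m ≤ n) :
    ST4Deg (completeBipartiteGraph (Fin m) (Fin n))
      (fun _ => m * (n - 1) * k + m * n) (fun _ => n * k + n) := by
  have hblocks : ∀ q ≤ k, WinB (m * (n - 1) * k + m * n) (n * k + n)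
      (fun _ : Fin m => n * q) (fun _ : Fin n => m * (n - 1) * q) := by
    intro q
    induction q with
    | zero => intro _; simpa using winB_zero (by omega)
    | succ q ih =>
      intro hq
      have := WinB.of_sweep (n * q) (m * (n - 1) * q) n (n - 1) ?_ (ih (by omega))
      · convert this using 2 <;> ring
      · intro i x τ hτ hx
        refine WinB.of_saved_run i _ x ?_ (by omega) τ hτ
        obtain ⟨r, rfl⟩ := Nat.exists_eq_add_of_le hq
        obtain ⟨n, rfl⟩ : ∃ n', n = n' + 1 := ⟨n - 1, by omega⟩
        obtain ⟨m, rfl⟩ := Nat.exists_eq_add_of_le hm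
        simp only [Nat.add_sub_cancel] at hx ⊢
        -- shields on `Fin n` drop by `m * (n - 1) ≥ n` per sweep, at least as fast as targets
        have h1 : (n + 1) * r ≤ (2 + m) * n * r := Nat.mul_le_mul_right _ (by nlinarith)
        nlinarith
  have hstart := WinB.of_sweep (n * k) (m * (n - 1) * k) n n
    (fun i x τ hτ _ => WinB.of_unsaved_run i _ x n τ hτ) (hblocks k le_rfl)
  unfold WinB Win enc at hstart
  unfold ST4Deg
  convert hstart using 1
  · ext v
    rcases v with v | v <;> simp <;> omega
  · funext v
    rcases v with v | v <;> simp
  · funext v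
    rcases v with v | v <;> simp <;> omega

/-- For all integers `m, n` with `2 ≤ m ≤ n`, the complete bipartite graph
`K_{m,n}` satisfies `ST⁽⁴⁾*(K_{m,n}) ≤ m + 1 − m/n`. -/
theorem st4Star_completeBipartite_le (m n : ℕ) (hm : 2 ≤ m) (hmn : m ≤ n) :
    ST4Star (completeBipartiteGraph (Fin m) (Fin n)) ≤ (m : ℝ) + 1 - (m : ℝ) / (n : ℝ) := by
  have hn0 : (0 : ℝ) < n := by exact_mod_cast (by omega : 0 < n)
  have hle : ∀ k : ℕ, ST4Star (completeBipartiteGraph (Fin m) (Fin n)) ≤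
      (m : ℝ) + 1 - (m : ℝ) / (n : ℝ) + (m : ℝ) / n * (1 / ((k : ℝ) + 1)) := by
    intro k
    refine csInf_le ⟨0, ?_⟩ ⟨_, _, ?_, st4Deg_completeBipartite m n k hm hmn, ?_⟩
    · rintro x ⟨s, t, -, -, rfl⟩
      positivity
    · omega
    · have hk : (k : ℝ) + 1 ≠ 0 := by positivity
      push_cast [Nat.cast_sub (by omega : 1 ≤ n)]
      have : (n : ℝ) * k + n = n * (k + 1) := by ring
      rw [this]
      field_simp
      ring
  refine ge_of_tendsto' (x := Filter.atTop) ?_ hle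
  have := (tendsto_one_div_add_atTop_nhds_zero_nat (𝕜 := ℝ)).const_mul ((m : ℝ) / n)
  simpa using this.const_add ((m : ℝ) + 1 - (m : ℝ) / n)

end StrictDeg
end
end

section
/- For any ε ∈ (0,1], any m ∈ ℕ, and any integer n with n ≥ 5m/ε, the complete bipartite graph K_{m,n} satisfies ST^(4)*(K_{m,n}) ≥ m + 1 − ε. -/
/-!
Let `X` and `Y` be the sides of `K_{m,n}`, of sizes `m` and `n`. The bound comes from a potential
argument. In a state with active parts `X_A`, `Y_A`, put `D = ∑_{x ∈ X_A} T x`. If the state admits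
a complete restricted legal sequence, then for some `B ⊆ X_A` with `|B| = min (2, |X_A|)`
`∑_{y ∈ Y_A} min (D - S y, T y) ≤ D + ∑_{b ∈ B} S b`   (`pot_le`).
The set `B` consists of the last two (or the only) vertices of `X` to be removed; the inequality is
propagated backwards along the sequence:

* an operation at a vertex of `X` lowers `D` by one and each `D - S y` by at most one, and only for
  the single saved `y` (`left_step`);
* an operation at `u ∈ Y` changes only the summand of `u`, by at most one. If it does not save all
  of `B`, then `∑_B S` drops as well. If it does, then `|B| ≤ 1`, so `B = X_A` lies in the saved
  set, and legality forces `D - S u < T u`; the minimum is then `D - S u`, which does not depend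
  on `T u` (`right_step`).

For the constant functions `s`, `t` this reads `n * min (m t - s, t) ≤ m t + 2 s`. If
`s < (m - ε) t`, the left side is at least `n ε t ≥ 5 m t`, while the right side is less than
`3 m t`, a contradiction. Since `sInf ∅ = 0`, it is also needed that some `(s, t)` works: `t = 1`
and `s` the number of vertices, saving nothing.
-/

open scoped Classical

noncomputable section

namespace StrictDeg

variable {V : Type}

/-- The active vertices of the side `Fin m`. -/
def leftA {m n : ℕ} (st : State (Fin m ⊕ Fin n)) : Finset (Fin m ⊕ Fin n) :=
  st.A.filter (fun v => v.isLeft = true)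

/-- The active vertices of the side `Fin n`. -/
def rightA {m n : ℕ} (st : State (Fin m ⊕ Fin n)) : Finset (Fin m ⊕ Fin n) :=
  st.A.filter (fun v => v.isRight = true)

/-- The number of operations still to be performed at vertices of the side `Fin m`. -/
def leftT {m n : ℕ} (st : State (Fin m ⊕ Fin n)) : ℤ := ∑ x ∈ leftA st, (st.T x : ℤ)

/-- The potential `∑_y min (D - S y, T y)` over the active vertices `y` of the side `Fin n`,
where `D` is `leftT st`. -/
def pot {m n : ℕ} (st : State (Fin m ⊕ Fin n)) : ℤ :=
  ∑ y ∈ rightA st, min (leftT st - (st.S y : ℤ)) (st.T y : ℤ)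

lemma applyStep_T_pos {G : SimpleGraph V} {st : State V} {u : V} {W : Finset V}
    (hT : ∀ v, 1 ≤ st.T v) (v : V) : 1 ≤ (applyStep G st u W).T v := by
  have := hT v
  simp only [applyStep]
  split_ifs <;> omega

lemma applyStep_S_le {G : SimpleGraph V} {st : State V} {u : V} {W : Finset V} (v : V) :
    (applyStep G st u W).S v ≤ st.S v := by
  simp only [applyStep]
  split_ifs <;> omega

lemma applyStep_S_of_not_adj {G : SimpleGraph V} {st : State V} {u v : V} {W : Finset V}
    (h : ¬ G.Adj u v) : (applyStep G st u W).S v = st.S v := by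
  simp [applyStep, h]

lemma applyStep_T_of_ne {G : SimpleGraph V} {st : State V} {u v : V} {W : Finset V}
    (h : v ≠ u) : (applyStep G st u W).T v = st.T v := by
  simp [applyStep, h]

section Steps

variable {m n : ℕ} {st : State (Fin m ⊕ Fin n)} {u : Fin m ⊕ Fin n} {W : Finset (Fin m ⊕ Fin n)}

lemma leftA_applyStep_of_isRight (hu : u.isRight = true) :
    leftA (applyStep (completeBipartiteGraph (Fin m) (Fin n)) st u W) = leftA st := by
  ext v
  simp only [leftA, applyStep, Finset.mem_filter]
  split_ifs <;> simp only [Finset.mem_erase]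
  constructor
  · tauto
  · rintro ⟨h1, h2⟩
    refine ⟨⟨?_, h1⟩, h2⟩
    rintro rfl
    cases v <;> simp_all

lemma rightA_applyStep_of_isLeft (hu : u.isLeft = true) :
    rightA (applyStep (completeBipartiteGraph (Fin m) (Fin n)) st u W) = rightA st := by
  ext v
  simp only [rightA, applyStep, Finset.mem_filter]
  split_ifs <;> simp only [Finset.mem_erase]
  constructor
  · tauto
  · rintro ⟨h1, h2⟩
    refine ⟨⟨?_, h1⟩, h2⟩
    rintro rfl
    cases v <;> simp_all

lemma leftA_applyStep_subset :
    leftA (applyStep (completeBipartiteGraph (Fin m) (Fin n)) st u W) ⊆ leftA st := by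
  intro v
  simp only [leftA, applyStep, Finset.mem_filter]
  split_ifs
  · simp only [Finset.mem_erase]; tauto
  · exact id

lemma leftT_applyStep_of_isRight (hu : u.isRight = true) :
    leftT (applyStep (completeBipartiteGraph (Fin m) (Fin n)) st u W) = leftT st := by
  unfold leftT
  rw [leftA_applyStep_of_isRight hu]
  refine Finset.sum_congr rfl fun x hx => ?_
  rw [applyStep_T_of_ne]
  rintro rfl
  cases x <;> simp_all [leftA]

lemma leftT_applyStep_of_isLeft (hT : ∀ v, 1 ≤ st.T v) (hu : u.isLeft = true) (huA : u ∈ st.A) :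
    leftT (applyStep (completeBipartiteGraph (Fin m) (Fin n)) st u W) = leftT st - 1 := by
  have hmem : u ∈ leftA st := by simp [leftA, hu, huA]
  unfold leftT
  rw [← Finset.add_sum_erase _ _ hmem]
  by_cases h1 : st.T u = 1
  · have : leftA (applyStep (completeBipartiteGraph (Fin m) (Fin n)) st u W)
        = (leftA st).erase u := by
      ext v
      simp [leftA, applyStep, h1, and_assoc]
    rw [this, h1]
    push_cast
    rw [add_sub_cancel_left]
    refine Finset.sum_congr rfl fun x hx => ?_
    rw [applyStep_T_of_ne (Finset.ne_of_mem_erase hx)]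
  · have : leftA (applyStep (completeBipartiteGraph (Fin m) (Fin n)) st u W) = leftA st := by
      simp [leftA, applyStep, h1]
    rw [this, ← Finset.add_sum_erase _ _ hmem]
    have h2 : ((applyStep (completeBipartiteGraph (Fin m) (Fin n)) st u W).T u : ℤ)
        = st.T u - 1 := by
      have := hT u
      simp only [applyStep]
      rw [if_pos ⟨trivial, by omega⟩]
      omega
    have h3 : ∑ x ∈ (leftA st).erase u,
        ((applyStep (completeBipartiteGraph (Fin m) (Fin n)) st u W).T x : ℤ)
        = ∑ x ∈ (leftA st).erase u, (st.T x : ℤ) :=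
      Finset.sum_congr rfl fun x hx => by rw [applyStep_T_of_ne (Finset.ne_of_mem_erase hx)]
    rw [h2, h3]
    ring

/-- An operation at a vertex of `Fin m` lowers the potential by at most one: only the summand of
the saved vertex can change. -/
lemma left_step (hT : ∀ v, 1 ≤ st.T v) (hu : u.isLeft = true)
    (hleg : LegalStep (completeBipartiteGraph (Fin m) (Fin n)) st u W) (hW : W.card ≤ 1) :
    pot st ≤ pot (applyStep (completeBipartiteGraph (Fin m) (Fin n)) st u W) + 1 := by
  obtain ⟨huA, -, -, hS⟩ := hleg
  have hind : ∑ y ∈ rightA st, (if y ∈ W then (1 : ℤ) else 0) ≤ 1 := by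
    rw [Finset.sum_ite_mem, Finset.sum_const]
    have := Finset.card_le_card (Finset.inter_subset_right (s₁ := rightA st) (s₂ := W))
    simp only [nsmul_eq_mul, mul_one]
    omega
  have key : pot st ≤ pot (applyStep (completeBipartiteGraph (Fin m) (Fin n)) st u W)
      + ∑ y ∈ rightA st, (if y ∈ W then (1 : ℤ) else 0) := by
    unfold pot
    rw [rightA_applyStep_of_isLeft hu, leftT_applyStep_of_isLeft hT hu huA,
      ← Finset.sum_add_distrib]
    refine Finset.sum_le_sum fun y hy => ?_
    simp only [rightA, Finset.mem_filter] at hy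
    have hne : y ≠ u := by
      rintro rfl
      cases y <;> simp_all
    have hadj : (completeBipartiteGraph (Fin m) (Fin n)).Adj u y := by
      simp [completeBipartiteGraph, hu, hy.2]
    rw [applyStep_T_of_ne hne]
    by_cases hyW : y ∈ W
    · have : (applyStep (completeBipartiteGraph (Fin m) (Fin n)) st u W).S y = st.S y := by
        simp [applyStep, hyW]
      rw [this, if_pos hyW]
      omega
    · have h1 := hS y hy.1 hadj hyW
      have : (applyStep (completeBipartiteGraph (Fin m) (Fin n)) st u W).S y = st.S y - 1 := by
        exact if_pos ⟨hadj, hy.1, hyW⟩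
      rw [this, if_neg hyW]
      omega
  linarith

/-- An operation at a vertex `u` of `Fin n` changes only the summand of `u` in the potential. It
lowers it by at most one, and not at all if `leftT st - S u < T u`. -/
lemma right_step (hT : ∀ v, 1 ≤ st.T v) (hu : u.isRight = true) (huA : u ∈ st.A) :
    pot st ≤ pot (applyStep (completeBipartiteGraph (Fin m) (Fin n)) st u W) + 1 ∧
    (leftT st - (st.S u : ℤ) < st.T u →
      pot st ≤ pot (applyStep (completeBipartiteGraph (Fin m) (Fin n)) st u W)) := by
  have hmem : u ∈ rightA st := by simp [rightA, hu, huA]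
  have hS : ∀ y : Fin m ⊕ Fin n, y.isRight = true →
      (applyStep (completeBipartiteGraph (Fin m) (Fin n)) st u W).S y = st.S y := by
    intro y hy
    apply applyStep_S_of_not_adj
    cases y <;> cases u <;> simp_all
  have hrest : ∑ y ∈ (rightA st).erase u, min (leftT st -
        ((applyStep (completeBipartiteGraph (Fin m) (Fin n)) st u W).S y : ℤ))
        ((applyStep (completeBipartiteGraph (Fin m) (Fin n)) st u W).T y : ℤ)
      = ∑ y ∈ (rightA st).erase u, min (leftT st - (st.S y : ℤ)) (st.T y : ℤ) := by
    refine Finset.sum_congr rfl fun y hy => ?_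
    have hy2 : y.isRight = true := by
      have := Finset.mem_of_mem_erase hy
      simp only [rightA, Finset.mem_filter] at this
      exact this.2
    rw [applyStep_T_of_ne (Finset.ne_of_mem_erase hy), hS y hy2]
  unfold pot
  rw [leftT_applyStep_of_isRight hu, ← Finset.add_sum_erase _ _ hmem]
  by_cases h1 : st.T u = 1
  · have : rightA (applyStep (completeBipartiteGraph (Fin m) (Fin n)) st u W)
        = (rightA st).erase u := by
      ext v
      simp [rightA, applyStep, h1, and_assoc]
    rw [this, hrest, h1]
    constructor
    · omega
    · intro h
      omega
  · have : rightA (applyStep (completeBipartiteGraph (Fin m) (Fin n)) st u W) = rightA st := by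
      simp [rightA, applyStep, h1]
    rw [this, ← Finset.add_sum_erase _ _ hmem, hrest, hS u hu]
    have h2 : (applyStep (completeBipartiteGraph (Fin m) (Fin n)) st u W).T u = st.T u - 1 := by
      have := hT u
      simp only [applyStep]
      rw [if_pos ⟨trivial, by omega⟩]
    have := hT u
    rw [h2]
    constructor
    · omega
    · intro h
      omega

end Steps

/-- The potential inequality for a state admitting a complete restricted legal sequence. -/
lemma pot_le {m n : ℕ} (l : List ((Fin m ⊕ Fin n) × Finset (Fin m ⊕ Fin n))) :
    ∀ st : State (Fin m ⊕ Fin n), (∀ v, 1 ≤ st.T v) →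
      LegalSeq (completeBipartiteGraph (Fin m) (Fin n)) st l →
      (∀ op ∈ l, op.2.card ≤ 1) →
      (finalState (completeBipartiteGraph (Fin m) (Fin n)) st l).A = ∅ →
      ∃ B ⊆ leftA st, B.card = min 2 (leftA st).card ∧
        pot st ≤ leftT st + ∑ b ∈ B, (st.S b : ℤ) := by
  induction l with
  | nil =>
    intro st _ _ _ hfin
    have hA : st.A = ∅ := hfin
    exact ⟨∅, by simp, by simp [leftA, hA], by simp [pot, leftT, leftA, rightA, hA]⟩
  | cons op rest ih =>
    intro st hT hseq hcard hfin
    obtain ⟨u, W⟩ := op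
    obtain ⟨hleg, hseq'⟩ := hseq
    have hW : W.card ≤ 1 := hcard (u, W) (by simp)
    obtain ⟨B', hB'sub, hB'card, hpot⟩ := ih _ (applyStep_T_pos hT) hseq'
      (fun op hop => hcard op (List.mem_cons_of_mem _ hop)) hfin
    have huA : u ∈ st.A := hleg.1
    dsimp only at hB'sub hB'card hpot hleg
    rcases Bool.eq_false_or_eq_true u.isLeft with hu | hu
    · have hc := Finset.card_le_card hB'sub
      have hsub := leftA_applyStep_subset (st := st) (u := u) (W := W)
      have hc2 := Finset.card_le_card hsub
      -- If `u` is removed here, then `B'` may have to be enlarged by one more vertex.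
      obtain ⟨B, hB'B, hBsub, hBcard⟩ := Finset.exists_subsuperset_card_eq
        (hB'sub.trans hsub) (n := min 2 (leftA st).card) (by omega) (by omega)
      refine ⟨B, hBsub, hBcard, ?_⟩
      have h1 := left_step hT hu hleg hW
      have h2 := leftT_applyStep_of_isLeft (W := W) hT hu huA
      have h3 : ∑ b ∈ B', ((applyStep (completeBipartiteGraph (Fin m) (Fin n)) st u W).S b : ℤ)
          ≤ ∑ b ∈ B, (st.S b : ℤ) :=
        (Finset.sum_le_sum fun b _ => by exact_mod_cast applyStep_S_le b).trans
          (Finset.sum_le_sum_of_subset_of_nonneg hB'B fun _ _ _ => by positivity)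
      linarith
    · have hu' : u.isRight = true := by cases u <;> simp_all
      rw [leftA_applyStep_of_isRight hu'] at hB'sub hB'card
      rw [leftT_applyStep_of_isRight hu'] at hpot
      refine ⟨B', hB'sub, hB'card, ?_⟩
      obtain ⟨hr1, hr2⟩ := right_step (W := W) hT hu' huA
      by_cases hBW : B' ⊆ W
      · have hc := Finset.card_le_card hBW
        have hBeq : B' = leftA st := Finset.eq_of_subset_of_card_le hB'sub (by omega)
        have hlt : leftT st - (st.S u : ℤ) < st.T u := by
          have h1 : leftT st ≤ ∑ w ∈ W, ((st.S w : ℤ) + st.T w) := by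
            unfold leftT
            rw [← hBeq]
            exact (Finset.sum_le_sum fun b _ => by simp).trans
              (Finset.sum_le_sum_of_subset_of_nonneg hBW fun _ _ _ => by positivity)
          have h2 : ∑ w ∈ W, ((st.S w : ℤ) + st.T w) < (st.S u : ℤ) + st.T u := by
            exact_mod_cast hleg.2.2.1
          linarith
        have h3 : ∑ b ∈ B', ((applyStep (completeBipartiteGraph (Fin m) (Fin n)) st u W).S b : ℤ)
            ≤ ∑ b ∈ B', (st.S b : ℤ) :=
          Finset.sum_le_sum fun b _ => by exact_mod_cast applyStep_S_le b
        linarith [hr2 hlt]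
      · obtain ⟨b, hb, hbW⟩ := Finset.not_subset.mp hBW
        have hbl := hB'sub hb
        simp only [leftA, Finset.mem_filter] at hbl
        have hadj : (completeBipartiteGraph (Fin m) (Fin n)).Adj u b := by
          simp [completeBipartiteGraph, hu', hbl.2]
        have hpos := hleg.2.2.2 b hbl.1 hadj hbW
        have hlow : (applyStep (completeBipartiteGraph (Fin m) (Fin n)) st u W).S b
            = st.S b - 1 := by
          exact if_pos ⟨hadj, hbl.1, hbW⟩
        have h3 : ∑ b ∈ B', ((applyStep (completeBipartiteGraph (Fin m) (Fin n)) st u W).S b : ℤ)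
            < ∑ b ∈ B', (st.S b : ℤ) :=
          Finset.sum_lt_sum (fun b _ => by exact_mod_cast applyStep_S_le b)
            ⟨b, hb, by rw [hlow]; omega⟩
        linarith

/-- With all targets equal to one and large shields, the vertices can be removed one by one
without saving anything. -/
lemma st4DegOn_of_card_le (G : SimpleGraph V) (k : ℕ) : ∀ (A : Finset V) (S T : V → ℕ),
    A.card = k → (∀ v, T v = 1) → (∀ v, k ≤ S v) → ST4DegOn G A S T := by
  induction k with
  | zero =>
    intro A S T hA _ _
    exact ⟨[], trivial, by simp, Finset.card_eq_zero.mp hA⟩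
  | succ k ih =>
    intro A S T hA hT hS
    obtain ⟨u, hu⟩ := Finset.card_pos.mp (by omega : 0 < A.card)
    obtain ⟨l, h1, h2, h3⟩ := ih (applyStep G ⟨A, S, T⟩ u ∅).A (applyStep G ⟨A, S, T⟩ u ∅).S
      (applyStep G ⟨A, S, T⟩ u ∅).T
      (by simp [applyStep, hT, Finset.card_erase_of_mem hu, hA])
      (by intro v; simp [applyStep, hT])
      (by intro v; have := hS v; simp only [applyStep]; split_ifs <;> omega)
    refine ⟨(u, ∅) :: l, ⟨⟨hu, by simp, by simp [hT], fun v _ _ _ => ?_⟩, h1⟩, ?_, h3⟩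
    · have := hS v
      change 1 ≤ S v
      omega
    · intro op hop
      rcases List.mem_cons.mp hop with rfl | hop
      · simp
      · exact h2 op hop

/-- The potential inequality evaluated at constant shield `s` and target `t`. -/
lemma st4Deg_const_bound {m n s t : ℕ} (ht : 1 ≤ t)
    (h : ST4Deg (completeBipartiteGraph (Fin m) (Fin n)) (fun _ => s) (fun _ => t)) :
    (n : ℤ) * min ((m : ℤ) * t - s) t ≤ m * t + 2 * s := by
  obtain ⟨l, h1, h2, h3⟩ := h
  obtain ⟨B, -, hBcard, hpot⟩ := pot_le l _ (fun _ => ht) h1 h2 h3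
  have hl : (Finset.univ.filter (fun v : Fin m ⊕ Fin n => v.isLeft = true)).card = m := by
    rw [Finset.card_filter, Fintype.sum_sum_type]
    simp
  have hr : (Finset.univ.filter (fun v : Fin m ⊕ Fin n => v.isRight = true)).card = n := by
    rw [Finset.card_filter, Fintype.sum_sum_type]
    simp
  simp only [pot, leftT, leftA, rightA, Finset.sum_const, hl, hr, nsmul_eq_mul] at hpot
  have hB : (B.card : ℤ) ≤ 2 := by omega
  have : (B.card : ℤ) * s ≤ 2 * s := mul_le_mul_of_nonneg_right hB (by positivity)
  linarith

/-- For any `ε ∈ (0,1]`, any `m ∈ ℕ` (so `m ≥ 1`), and any integer `n` with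
`n ≥ 5m/ε`, the complete bipartite graph `K_{m,n}` satisfies `ST⁽⁴⁾*(K_{m,n}) ≥ m + 1 − ε`. -/
theorem st4Star_completeBipartite_lowerBound (ε : ℝ) (hε0 : 0 < ε) (hε1 : ε ≤ 1)
    (m : ℕ) (hm : 1 ≤ m) (n : ℕ) (hn : 5 * (m : ℝ) / ε ≤ (n : ℝ)) :
    (m : ℝ) + 1 - ε ≤ ST4Star (completeBipartiteGraph (Fin m) (Fin n)) := by
  refine le_csInf ⟨_, _, 1, le_rfl, st4DegOn_of_card_le _ _ Finset.univ
    (fun _ => (Finset.univ : Finset (Fin m ⊕ Fin n)).card) (fun _ => 1) rfl (fun _ => rfl)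
    (fun _ => le_rfl), rfl⟩ ?_
  rintro x ⟨s, t, ht, hdeg, rfl⟩
  have hb : (n : ℝ) * min ((m : ℝ) * t - s) t ≤ m * t + 2 * s := by
    exact_mod_cast st4Deg_const_bound ht hdeg
  have ht' : (0 : ℝ) < t := by exact_mod_cast ht
  have hm' : (0 : ℝ) < m := by exact_mod_cast hm
  rw [le_div_iff₀ ht']
  by_contra! hlt
  rw [div_le_iff₀ hε0] at hn
  have hmin : ε * t ≤ min ((m : ℝ) * t - s) t := le_min (by linarith) (by nlinarith)
  have h1 : (n : ℝ) * (ε * t) ≤ n * min ((m : ℝ) * t - s) t :=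
    mul_le_mul_of_nonneg_left hmin (by positivity)
  have h2 : 5 * (m : ℝ) * t ≤ n * ε * t := mul_le_mul_of_nonneg_right hn ht'.le
  have h3 : 0 < ε * t := by positivity
  have h4 : 0 < (m : ℝ) * t := by positivity
  nlinarith

end StrictDeg
end
end

section
/- For each j ∈ {3,4}, each integer s ≥ 0, and each integer t ≥ 1: if a (possibly empty) graph G is ST^(j)-(s,t)-degenerate, then G is ST^(j)-(ks,kt)-degenerate for every k ∈ ℕ. -/
/-!
Each operation `(u, W)` of a complete legal sequence for `(S, T)` is repeated `k` times in the
process started from `(k S, k T)`. During the repetitions `S w + T w` does not change for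
`w ∈ W`, while `S u + T u` drops by one each time. Strictness of the original inequality gives
`k (S u + T u) ≥ k ∑ (S w + T w) + k`, so all `k` repetitions are legal (`Mid.legal`). After them
the state is again `k` times the original one on the surviving vertices (`Mid.last`), so induction
on the sequence applies (`legalSeq_scaled`). The set `W` of each operation is kept, hence a
restricted sequence stays restricted.
-/

open scoped Classical

noncomputable section

namespace StrictDeg

variable {V : Type}

/-- On the active vertices, which agree for both states, `st'` is `k` times `st`, and the targets
of `st` are positive. Values at deleted vertices are irrelevant and left unconstrained. -/
def Scaled (k : ℕ) (st st' : State V) : Prop :=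
  st'.A = st.A ∧ ∀ v ∈ st.A, 1 ≤ st.T v ∧ st'.S v = k * st.S v ∧ st'.T v = k * st.T v

/-- `st'` is `k` times `st` after `i` repetitions of the operation `(u, W)`, before `u` is
deleted. -/
def Mid (G : SimpleGraph V) (k : ℕ) (u : V) (W : Finset V) (i : ℕ) (st st' : State V) : Prop :=
  st'.A = st.A ∧ ∀ v ∈ st.A, 1 ≤ st.T v ∧
    st'.S v + (if G.Adj u v ∧ v ∉ W then i else 0) = k * st.S v ∧
    st'.T v + (if v = u then i else 0) = k * st.T v

theorem Scaled.mid {G : SimpleGraph V} {k : ℕ} {u : V} {W : Finset V} {st st' : State V}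
    (h : Scaled k st st') : Mid G k u W 0 st st' := by
  refine ⟨h.1, fun v hv => ?_⟩
  simpa using h.2 v hv

theorem Mid.legal {G : SimpleGraph V} {k i : ℕ} {u : V} {W : Finset V} {st st' : State V}
    (h : Mid G k u W i st st') (hi : i < k) (hl : LegalStep G st u W) :
    LegalStep G st' u W := by
  obtain ⟨hA, h⟩ := h
  obtain ⟨hu, hW, hsum, hsh⟩ := hl
  refine ⟨hA ▸ hu, fun w hw => hA ▸ hW w hw, ?_, fun v hv hadj hvW => ?_⟩
  · have e : ∑ w ∈ W, (st'.S w + st'.T w) = k * ∑ w ∈ W, (st.S w + st.T w) := by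
      rw [Finset.mul_sum]
      refine Finset.sum_congr rfl fun w hw => ?_
      obtain ⟨-, h1, h2⟩ := h w (hW w hw).1
      have hne : w ≠ u := (hW w hw).2.ne'
      simp only [hw, hne, not_true_eq_false, and_false, if_false, add_zero] at h1 h2
      rw [h1, h2, mul_add]
    obtain ⟨-, h1, h2⟩ := h u hu
    simp only [SimpleGraph.irrefl, false_and, if_false, if_true, add_zero] at h1 h2
    have := Nat.mul_le_mul_left k (Nat.succ_le_of_lt hsum)
    rw [e]
    simp only [Nat.succ_eq_add_one, mul_add, mul_one] at this ⊢
    omega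
  · rw [hA] at hv
    obtain ⟨-, h1, -⟩ := h v hv
    rw [if_pos ⟨hadj, hvW⟩] at h1
    have := Nat.mul_le_mul_left k (hsh v hv hadj hvW)
    omega

theorem Mid.next {G : SimpleGraph V} {k i : ℕ} {u : V} {W : Finset V} {st st' : State V}
    (h : Mid G k u W i st st') (hi : i + 1 < k) (hl : LegalStep G st u W) :
    Mid G k u W (i + 1) st (applyStep G st' u W) := by
  have hl' := h.legal (by omega) hl
  obtain ⟨hA, h⟩ := h
  have hT : 1 < st'.T u := by
    obtain ⟨h0, -, h2⟩ := h u hl.1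
    rw [if_pos rfl] at h2
    have := Nat.mul_le_mul_left k h0
    omega
  refine ⟨by simp [applyStep, hT.ne', hA], fun v hv => ?_⟩
  obtain ⟨h0, h1, h2⟩ := h v hv
  refine ⟨h0, ?_, ?_⟩
  · by_cases hc : G.Adj u v ∧ v ∉ W
    · have := hl'.2.2.2 v (hA ▸ hv) hc.1 hc.2
      have hc' : G.Adj u v ∧ v ∈ st'.A ∧ v ∉ W := ⟨hc.1, hA ▸ hv, hc.2⟩
      simp only [applyStep, if_pos hc, if_pos hc'] at h1 ⊢
      omega
    · have hc' : ¬ (G.Adj u v ∧ v ∈ st'.A ∧ v ∉ W) := fun x => hc ⟨x.1, x.2.2⟩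
      simpa only [applyStep, if_neg hc, if_neg hc'] using h1
  · by_cases hc : v = u
    · subst hc
      simp only [applyStep, hT, true_and, if_true] at h2 ⊢
      omega
    · simpa [applyStep, hc] using h2

/-- The last of the `k` repetitions deletes `u` exactly when the original operation does. -/
theorem Mid.last {G : SimpleGraph V} {k i : ℕ} {u : V} {W : Finset V} {st st' : State V}
    (h : Mid G k u W i st st') (hi : i + 1 = k) (hl : LegalStep G st u W) :
    Scaled k (applyStep G st u W) (applyStep G st' u W) := by
  have hl' := h.legal (by omega) hl
  obtain ⟨hA, h⟩ := h
  obtain ⟨h0u, -, h2u⟩ := h u hl.1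
  rw [if_pos rfl] at h2u
  -- write `T u = m + 1`; then the current scaled target of `u` is `k * m + 1`
  obtain ⟨m, hm⟩ : ∃ m, st.T u = m + 1 := ⟨st.T u - 1, by omega⟩
  have hm' : st'.T u = k * m + 1 := by
    rw [hm, mul_add, mul_one] at h2u
    omega
  have hk : 0 < k := by omega
  have hiff : st'.T u = 1 ↔ st.T u = 1 := by
    rw [hm, hm']
    simp [hk.ne']
  have hsub : ∀ v ∈ (applyStep G st u W).A, v ∈ st.A ∧ (v = u → 1 < st.T u) := by
    intro v hv
    simp only [applyStep] at hv
    split_ifs at hv with h1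
    · exact ⟨Finset.mem_of_mem_erase hv, fun e => absurd e (Finset.ne_of_mem_erase hv)⟩
    · exact ⟨hv, fun _ => by omega⟩
  refine ⟨by simp only [applyStep, hiff, hA], fun v hv' => ?_⟩
  obtain ⟨hv, hvu⟩ := hsub v hv'
  obtain ⟨h0, h1, h2⟩ := h v hv
  refine ⟨?_, ?_, ?_⟩
  · simp only [applyStep]
    split_ifs <;> omega
  · by_cases hc : G.Adj u v ∧ v ∉ W
    · have hc1 : G.Adj u v ∧ v ∈ st.A ∧ v ∉ W := ⟨hc.1, hv, hc.2⟩
      have hc2 : G.Adj u v ∧ v ∈ st'.A ∧ v ∉ W := ⟨hc.1, hA ▸ hv, hc.2⟩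
      simp only [applyStep, if_pos hc, if_pos hc1, if_pos hc2, Nat.mul_sub, mul_one] at h1 ⊢
      omega
    · have hc1 : ¬ (G.Adj u v ∧ v ∈ st.A ∧ v ∉ W) := fun x => hc ⟨x.1, x.2.2⟩
      have hc2 : ¬ (G.Adj u v ∧ v ∈ st'.A ∧ v ∉ W) := fun x => hc ⟨x.1, x.2.2⟩
      simpa only [applyStep, if_neg hc, if_neg hc1, if_neg hc2, add_zero] using h1
  · by_cases hc : v = u
    · subst hc
      have hT := hvu rfl
      have hmpos : 0 < m := by omega
      have : 0 < k * m := Nat.mul_pos hk hmpos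
      simp [applyStep, hm, hm', this, hmpos]
    · simpa [applyStep, hc] using h2

/-- The remaining `n = k - i` repetitions of `(u, W)` can be put in front of any legal sequence
`rest` that works from every scaled copy of the state after the original operation. -/
theorem Mid.run {G : SimpleGraph V} {k : ℕ} {u : V} {W : Finset V} {st : State V}
    (hl : LegalStep G st u W) (B : Finset V) (rest : List (V × Finset V))
    (hrest : ∀ st'', Scaled k (applyStep G st u W) st'' →
      LegalSeq G st'' rest ∧ (finalState G st'' rest).A = B) :
    ∀ (n i : ℕ) (st' : State V), i + (n + 1) = k → Mid G k u W i st st' →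
      LegalSeq G st' (List.replicate (n + 1) (u, W) ++ rest) ∧
        (finalState G st' (List.replicate (n + 1) (u, W) ++ rest)).A = B := by
  intro n
  induction n with
  | zero =>
    intro i st' hi h
    have := hrest _ (h.last hi hl)
    exact ⟨⟨h.legal (by omega) hl, this.1⟩, this.2⟩
  | succ n ih =>
    intro i st' hi h
    have := ih (i + 1) _ (by omega) (h.next (by omega) hl)
    exact ⟨⟨h.legal (by omega) hl, this.1⟩, this.2⟩

theorem legalSeq_scaled {G : SimpleGraph V} {k : ℕ} (hk : 1 ≤ k) (l : List (V × Finset V)) :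
    ∀ st st' : State V, Scaled k st st' → LegalSeq G st l →
      LegalSeq G st' (l.flatMap (List.replicate k)) ∧
        (finalState G st' (l.flatMap (List.replicate k))).A = (finalState G st l).A := by
  induction l with
  | nil => exact fun st st' h _ => ⟨trivial, h.1⟩
  | cons op l ih =>
    rintro st st' h ⟨hl, hseq⟩
    obtain ⟨n, rfl⟩ : ∃ n, k = n + 1 := ⟨k - 1, by omega⟩
    exact Mid.run hl _ _ (fun st'' h'' => ih _ st'' h'' hseq) n 0 st' (by omega) h.mid

/-- For each `j ∈ {3,4}`, each integer `s ≥ 0`, and each integer `t ≥ 1`: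
if a (possibly empty) graph `G` is `ST⁽ʲ⁾`-`(s,t)`-degenerate, then `G` is
`ST⁽ʲ⁾`-`(ks,kt)`-degenerate for every `k ∈ ℕ` (so `k ≥ 1`). -/
theorem stDeg_const_smul {V : Type} [Fintype V] (G : SimpleGraph V)
    (s t : ℕ) (ht : 1 ≤ t) (k : ℕ) (hk : 1 ≤ k) :
    (ST3Deg G (fun _ => s) (fun _ => t) → ST3Deg G (fun _ => k * s) (fun _ => k * t)) ∧
    (ST4Deg G (fun _ => s) (fun _ => t) → ST4Deg G (fun _ => k * s) (fun _ => k * t)) := by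
  have hsc : Scaled k (⟨Finset.univ, fun _ => s, fun _ => t⟩ : State V)
      ⟨Finset.univ, fun _ => k * s, fun _ => k * t⟩ := ⟨rfl, fun _ _ => ⟨ht, rfl, rfl⟩⟩
  constructor
  · rintro ⟨l, hl, hA⟩
    obtain ⟨h1, h2⟩ := legalSeq_scaled hk l _ _ hsc hl
    exact ⟨_, h1, h2.trans hA⟩
  · rintro ⟨l, hl, hW, hA⟩
    obtain ⟨h1, h2⟩ := legalSeq_scaled hk l _ _ hsc hl
    refine ⟨_, h1, fun op hop => ?_, h2.trans hA⟩
    obtain ⟨op', hop', hmem⟩ := List.mem_flatMap.mp hop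
    exact List.eq_of_mem_replicate hmem ▸ hW op' hop'

end StrictDeg
end
end
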